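/- arXiv:2605.13389 — 4 statements merged into one kernel-verified Lean document; each statement's English description precedes it below -/
import Mathlib

section
/- Let $d \ge 1$ and $p \in (1,2)$. Set $\kappa_p = 2^{2-p}(3-p)$, $\kappa'_p = p-1$ and $c'_p = 2^{p(p-2)/2}(\kappa'_p)^{p/2}$. Let $k : \mathbb{R}^d \times \mathbb{R}^d \to [0,\infty)$ be measurable and $u, v : \mathbb{R}^d \to \mathbb{R}$ measurable with $\mathcal{E}_k(u,u) < \infty$, $\mathcal{E}_k(v,v) < \infty$ and $\mathcal{E}_k(u,u) + \mathcal{E}_k(v,v) > 0$. Then $\mathcal{E}_k(u-v,u-v) < \infty$, the quantity $D := \mathcal{E}_k(u,u-v) - \mathcal{E}_k(v,u-v)$ is well defined and nonnegative, and $D \le \kappa_p\, \mathcal{E}_k(u-v,u-v)$ as well as $D^{p/2} \ge c'_p\, \mathcal{E}_k(u-v,u-v)\,\big(\mathcal{E}_k(u,u) + \mathcal{E}_k(v,v)\big)^{(p-2)/2}$ (note $(p-2)/2 < 0$, the last factor being a positive real power of a positive real). -/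
open MeasureTheory


/-- The nonlocal form `𝓔_k(u,v)` over `ℝ^d × ℝ^d` (product Lebesgue measure). -/
noncomputable def nlForm (d : ℕ) (p : ℝ)
    (k : EuclideanSpace ℝ (Fin d) → EuclideanSpace ℝ (Fin d) → ℝ)
    (u v : EuclideanSpace ℝ (Fin d) → ℝ) : ℝ :=
  ∫ z : EuclideanSpace ℝ (Fin d) × EuclideanSpace ℝ (Fin d),
    |u z.1 - u z.2| ^ (p - 2) * (u z.1 - u z.2) * (v z.1 - v z.2) * k z.1 z.2

/-- The (finite) energy `𝓔_k(u,u) = ∫∫ |u(x)-u(y)|^p k(x,y)` as a real number. -/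
noncomputable def nlDiag (d : ℕ) (p : ℝ)
    (k : EuclideanSpace ℝ (Fin d) → EuclideanSpace ℝ (Fin d) → ℝ)
    (u : EuclideanSpace ℝ (Fin d) → ℝ) : ℝ :=
  ∫ z : EuclideanSpace ℝ (Fin d) × EuclideanSpace ℝ (Fin d),
    |u z.1 - u z.2| ^ p * k z.1 z.2


theorem jpos (p a : ℝ) (hp1 : 1 < p) (ha : 0 ≤ a) : |a| ^ (p - 2) * a = a ^ (p - 1) := by
  rw [abs_of_nonneg ha]
  rcases ha.eq_or_lt with h | h
  · subst h
    rw [Real.zero_rpow (by linarith : p - 1 ≠ 0)]; simp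
  · rw [← Real.rpow_add_one h.ne']; congr 1; ring

theorem jneg (p a : ℝ) (hp1 : 1 < p) (ha : 0 ≤ a) : |(-a)| ^ (p - 2) * (-a) = - a ^ (p - 1) := by
  rw [abs_neg, mul_neg, jpos p a hp1 ha]

theorem rpow_succ' (p a : ℝ) (hp1 : 1 < p) (ha : 0 ≤ a) : a ^ (p - 1) * a = a ^ p := by
  rw [← Real.rpow_add_one' ha (by linarith)]; congr 1; ring

theorem one_le_kap (p : ℝ) (hp2 : p < 2) : 1 ≤ (2 : ℝ) ^ (2 - p) * (3 - p) := by
  have : (1:ℝ) ≤ 2 ^ (2 - p) := Real.one_le_rpow (by norm_num) (by linarith)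
  nlinarith

theorem W (p a b : ℝ) (hp1 : 1 < p) (hp2 : p < 2) :
    (|a| ^ (p - 2) * a * (a - b) - |b| ^ (p - 2) * b * (a - b) ≤
      (2 : ℝ) ^ (2 - p) * (3 - p) * |a - b| ^ p) ∧
    (p - 1) * |a - b| ^ (2:ℝ) * (|a| + |b|) ^ (p - 2) ≤
      |a| ^ (p - 2) * a * (a - b) - |b| ^ (p - 2) * b * (a - b) := by
  have key1 : ∀ a b : ℝ, 0 ≤ b → b ≤ a →
    (|a| ^ (p - 2) * a * (a - b) - |b| ^ (p - 2) * b * (a - b) ≤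
      (2 : ℝ) ^ (2 - p) * (3 - p) * |a - b| ^ p) ∧
    (p - 1) * |a - b| ^ (2:ℝ) * (|a| + |b|) ^ (p - 2) ≤
      |a| ^ (p - 2) * a * (a - b) - |b| ^ (p - 2) * b * (a - b) := by
    intro a b hb hab
    have ha := hb.trans hab
    have hd : 0 ≤ a - b := sub_nonneg.2 hab
    rw [jpos p a hp1 ha, jpos p b hp1 hb, abs_of_nonneg ha, abs_of_nonneg hb, abs_of_nonneg hd,
      ← sub_mul]
    constructor
    · have h1 := Real.rpow_add_le_add_rpow hd hb (p := p - 1) (by linarith) (by linarith)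
      rw [sub_add_cancel] at h1
      calc (a ^ (p-1) - b ^ (p-1)) * (a - b) ≤ (a - b) ^ (p-1) * (a - b) := by
            gcongr; linarith
        _ = 1 * (a - b) ^ p := by rw [rpow_succ' p _ hp1 hd, one_mul]
        _ ≤ _ := by gcongr; exact one_le_kap p hp2
    · rcases ha.eq_or_lt with h | h
      · have : b = 0 := by linarith
        subst this; subst h; simp
      have h2 : b ^ (p-1) ≤ a ^ (p-1) - (p-1) * a ^ (p-2) * (a - b) := by
        have := rpow_one_add_le_one_add_mul_self (s := b / a - 1) (p := p - 1)
          (by have : 0 ≤ b / a := by positivity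
              linarith) (by linarith) (by linarith)
        have e : 1 + (b / a - 1) = b / a := by ring
        rw [e, Real.div_rpow hb ha, div_le_iff₀ (by positivity)] at this
        have e2 : a ^ (p-1) = a ^ (p-2) * a := by
          rw [← Real.rpow_add_one h.ne']; congr 1; ring
        refine this.trans (le_of_eq ?_)
        rw [e2]; field_simp; ring
      have h3 : (a + b) ^ (p - 2) ≤ a ^ (p - 2) :=
        Real.rpow_le_rpow_of_nonpos h (by linarith) (by linarith)
      rw [Real.rpow_two]
      calc (p-1) * (a-b)^2 * (a+b)^(p-2) ≤ (p-1) * (a-b)^2 * a^(p-2) := by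
            have : 0 ≤ p - 1 := by linarith
            gcongr
        _ = ((p-1) * a ^ (p-2) * (a - b)) * (a - b) := by ring
        _ ≤ _ := by gcongr; linarith
  have key2 : ∀ a c : ℝ, 0 ≤ a → 0 ≤ c →
    (|a| ^ (p - 2) * a * (a - -c) - |-c| ^ (p - 2) * (-c) * (a - -c) ≤
      (2 : ℝ) ^ (2 - p) * (3 - p) * |a - -c| ^ p) ∧
    (p - 1) * |a - -c| ^ (2:ℝ) * (|a| + |-c|) ^ (p - 2) ≤
      |a| ^ (p - 2) * a * (a - -c) - |-c| ^ (p - 2) * (-c) * (a - -c) := by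
    intro a c ha hc
    rw [jpos p a hp1 ha, jneg p c hp1 hc, abs_neg, abs_of_nonneg ha, abs_of_nonneg hc, sub_neg_eq_add,
      abs_of_nonneg (by positivity : 0 ≤ a + c), ← sub_mul, sub_neg_eq_add]
    have hs : 0 ≤ a + c := by positivity
    constructor
    · have h1 : a ^ (p-1) + c ^ (p-1) ≤ 2 ^ (2-p) * (a + c) ^ (p-1) := by
        have hcc : ConcaveOn ℝ (Set.Ici 0) fun x : ℝ => x ^ (p - 1) :=
          Real.concaveOn_rpow (by linarith) (by linarith)
        have h2 := hcc.2
        have := h2 (Set.mem_Ici.2 ha) (Set.mem_Ici.2 hc) (by norm_num : (0:ℝ) ≤ 1/2)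
          (by norm_num : (0:ℝ) ≤ 1/2) (by norm_num)
        simp only [smul_eq_mul] at this
        have e : 1/2 * a + 1/2 * c = (a + c) / 2 := by ring
        rw [e, Real.div_rpow hs (by norm_num)] at this
        have e2 : (2:ℝ) ^ (2 - p) = 2 / 2 ^ (p - 1) := by
          rw [show 2 - p = 1 - (p - 1) by ring, Real.rpow_sub (by norm_num), Real.rpow_one]
        rw [e2]
        have : 2 / 2 ^ (p - 1) * (a + c) ^ (p-1) = 2 * ((a + c) ^ (p - 1) / 2 ^ (p-1)) := by ring
        linarith
      calc (a ^ (p-1) + c ^ (p-1)) * (a + c) ≤ (2 ^ (2-p) * (a + c) ^ (p-1)) * (a + c) := by gcongr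
        _ = 2 ^ (2-p) * 1 * (a + c) ^ p := by rw [mul_assoc, rpow_succ' p _ hp1 hs, mul_one]
        _ ≤ _ := by gcongr; linarith
    · rcases hs.eq_or_lt with h | h
      · rw [← h]; simp
      have h1 := Real.rpow_add_le_add_rpow ha hc (p := p - 1) (by linarith) (by linarith)
      calc (p-1) * (a+c)^(2:ℝ) * (a+c)^(p-2) = (p-1) * ((a + c)^(p-1) * (a + c)) := by
            rw [mul_assoc, ← Real.rpow_add h, rpow_succ' p _ hp1 hs]; congr 2; ring
        _ ≤ 1 * ((a + c)^(p-1) * (a + c)) := by gcongr; linarith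
        _ ≤ _ := by rw [one_mul]; gcongr
  have neg : ∀ a b : ℝ, |(-a)| ^ (p - 2) * (-a) * (-a - -b) - |(-b)| ^ (p - 2) * (-b) * (-a - -b)
     = |a| ^ (p - 2) * a * (a - b) - |b| ^ (p - 2) * b * (a - b) := by
    intro a b; rw [abs_neg, abs_neg]; ring
  have swap : ∀ a b : ℝ, |b| ^ (p - 2) * b * (b - a) - |a| ^ (p - 2) * a * (b - a)
     = |a| ^ (p - 2) * a * (a - b) - |b| ^ (p - 2) * b * (a - b) := by
    intro a b; ring
  have absn : ∀ a b : ℝ, |(-a) - (-b)| = |a - b| := by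
    intro a b; rw [← abs_neg]; congr 1; ring
  rcases le_total 0 a with ha | ha <;> rcases le_total 0 b with hb | hb
  · rcases le_total b a with h | h
    · exact key1 a b hb h
    · have := key1 b a ha h
      rwa [swap, abs_sub_comm b a, add_comm |b|] at this
  · have := key2 a (-b) ha (by linarith)
    rwa [neg_neg] at this
  · have := key2 b (-a) hb (by linarith)
    rwa [neg_neg, swap, abs_sub_comm b a, add_comm |b|] at this
  · rcases le_total b a with h | h
    · have := key1 (-b) (-a) (by linarith) (by linarith)
      rwa [neg, absn, swap, abs_sub_comm b a, abs_neg, abs_neg, add_comm |b|] at this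
    · have := key1 (-a) (-b) (by linarith) (by linarith)
      rwa [neg, absn, abs_neg, abs_neg] at this

theorem sumpow (p x y : ℝ) (hp1 : 1 < p) (hx : 0 ≤ x) (hy : 0 ≤ y) :
    (x + y) ^ p ≤ 2 ^ p * (x ^ p + y ^ p) := by
  wlog h : y ≤ x generalizing x y
  · rw [add_comm x, add_comm (x ^ p)]; exact this y x hy hx (le_of_not_ge h)
  calc (x + y) ^ p ≤ (2 * x) ^ p := by gcongr; linarith
    _ = 2 ^ p * (x ^ p) := by rw [Real.mul_rpow (by norm_num) hx]
    _ ≤ _ := by gcongr; have := Real.rpow_nonneg hy p; linarith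

theorem diffpow (p a b : ℝ) (hp1 : 1 < p) : |a - b| ^ p ≤ 2 ^ p * (|a| ^ p + |b| ^ p) :=
  (Real.rpow_le_rpow (abs_nonneg _) (abs_sub a b) (by linarith)).trans
    (sumpow p _ _ hp1 (abs_nonneg _) (abs_nonneg _))

theorem Jbd (p a b : ℝ) (hp1 : 1 < p) :
    |(|a| ^ (p - 2) * a * (a - b))| ≤ 2 ^ p * (|a| ^ p + |b| ^ p) := by
  have e : |(|a| ^ (p - 2) * a)| = |a| ^ (p - 1) := by
    rw [← jpos p |a| hp1 (abs_nonneg _), abs_mul, abs_abs, abs_of_nonneg (by positivity)]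
  rw [abs_mul, e]
  calc _ ≤ (|a| + |b|) ^ (p - 1) * (|a| + |b|) := by
        gcongr
        · linarith [abs_nonneg b]
        · exact abs_sub a b
    _ = (|a| + |b|) ^ p := rpow_succ' p _ hp1 (by positivity)
    _ ≤ _ := sumpow p _ _ hp1 (abs_nonneg _) (abs_nonneg _)

theorem ptw (p a b w k : ℝ) (hp1 : 1 < p) (hp2 : p < 2) (hk : 0 ≤ k)
    (hw : (p - 1) * |a - b| ^ (2:ℝ) * (|a| + |b|) ^ (p - 2) ≤ w) :
    (2 : ℝ) ^ (p * (p - 2) / 2) * (p-1) ^ (p / 2) * (|a - b| ^ p * k) ≤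
      (w * k) ^ (p / 2) * ((|a| ^ p + |b| ^ p) * k) ^ ((2 - p) / 2) := by
  have hp0 : 0 < p - 1 := by linarith
  have hw0 : 0 ≤ w := le_trans (by positivity) hw
  rcases (by positivity : 0 ≤ |a| + |b|).eq_or_lt with hm | hm
  · have : |a - b| = 0 := le_antisymm ((abs_sub a b).trans hm.symm.le) (abs_nonneg _)
    rw [this, Real.zero_rpow (by linarith)]
    simp only [zero_mul, mul_zero]; positivity
  set m := |a| + |b| with hmdef
  have h1 : (p-1) ^ (p/2) * |a-b| ^ p * m ^ ((p-2) * (p/2)) ≤ w ^ (p/2) := by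
    have := Real.rpow_le_rpow (by positivity) hw (by linarith : 0 ≤ p / 2)
    rw [Real.mul_rpow (by positivity) (by positivity), Real.mul_rpow (by positivity) (by positivity),
      ← Real.rpow_mul (abs_nonneg _), ← Real.rpow_mul hm.le, show 2 * (p/2) = p by ring] at this
    exact this
  have h2 : 2 ^ (p * (p-2)/2) * m ^ (p * ((2-p)/2)) ≤ (|a| ^ p + |b| ^ p) ^ ((2-p)/2) := by
    have h3 : 2 ^ (-p) * m ^ p ≤ |a| ^ p + |b| ^ p := by
      have := sumpow p |a| |b| hp1 (abs_nonneg _) (abs_nonneg _)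
      rw [Real.rpow_neg (by norm_num), inv_mul_le_iff₀ (by positivity)]; exact this
    have := Real.rpow_le_rpow (by positivity) h3 (by linarith : 0 ≤ (2 - p) / 2)
    rw [Real.mul_rpow (by positivity) (by positivity), ← Real.rpow_mul (by norm_num),
      ← Real.rpow_mul hm.le, show -p * ((2-p)/2) = p * (p-2)/2 by ring] at this
    exact this
  have e1 : m ^ ((p-2) * (p/2)) * m ^ (p * ((2-p)/2)) = 1 := by
    rw [← Real.rpow_add hm, show (p-2) * (p/2) + p * ((2-p)/2) = 0 by ring, Real.rpow_zero]
  have e2 : k ^ (p/2) * k ^ ((2-p)/2) = k := by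
    rw [← Real.rpow_add' hk (by ring_nf; norm_num), show p/2 + (2-p)/2 = 1 by ring, Real.rpow_one]
  rw [Real.mul_rpow hw0 hk, Real.mul_rpow (by positivity) hk]
  calc _ = 2 ^ (p * (p - 2) / 2) * (p-1) ^ (p / 2) * |a - b| ^ p *
        (m ^ ((p-2) * (p/2)) * m ^ (p * ((2-p)/2))) * (k ^ (p/2) * k ^ ((2-p)/2)) := by
        rw [e1, e2]; ring
    _ = ((p-1) ^ (p/2) * |a-b| ^ p * m ^ ((p-2) * (p/2))) *
        (2 ^ (p * (p-2)/2) * m ^ (p * ((2-p)/2))) * (k ^ (p/2) * k ^ ((2-p)/2)) := by ring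
    _ ≤ w ^ (p/2) * (|a| ^ p + |b| ^ p) ^ ((2-p)/2) * (k ^ (p/2) * k ^ ((2-p)/2)) := by
        gcongr
    _ = _ := by ring

theorem hold {α : Type*} [MeasurableSpace α] (μ : Measure α) (f F G : α → ℝ) (s t : ℝ)
    (hs : 0 < s) (ht : 0 < t) (hst : s + t = 1) (hf : Integrable f μ)
    (hF : Integrable F μ) (hG : Integrable G μ) (hF0 : ∀ x, 0 ≤ F x) (hG0 : ∀ x, 0 ≤ G x)
    (hY : 0 < ∫ x, G x ∂μ) (h : ∀ x, f x ≤ F x ^ s * G x ^ t) :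
    ∫ x, f x ∂μ ≤ (∫ x, F x ∂μ) ^ s * (∫ x, G x ∂μ) ^ t := by
  have hX0 : 0 ≤ ∫ x, F x ∂μ := integral_nonneg hF0
  rcases hX0.eq_or_lt with hX | hX
  · have h0 := (integral_eq_zero_iff_of_nonneg hF0 hF).1 hX.symm
    rw [← hX, Real.zero_rpow hs.ne', zero_mul]
    apply integral_nonpos_of_ae
    filter_upwards [h0] with x hx
    have := h x
    rw [hx] at this
    simpa [Real.zero_rpow hs.ne'] using this
  · set X := ∫ x, F x ∂μ with hXd
    set Y := ∫ x, G x ∂μ with hYd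
    have hb : ∀ x, f x ≤ X ^ s * Y ^ t * (s * (F x / X) + t * (G x / Y)) := by
      intro x
      have := Real.geom_mean_le_arith_mean2_weighted hs.le ht.le
        (div_nonneg (hF0 x) hX.le) (div_nonneg (hG0 x) hY.le) hst
      rw [Real.div_rpow (hF0 x) hX.le, Real.div_rpow (hG0 x) hY.le] at this
      calc f x ≤ F x ^ s * G x ^ t := h x
        _ = X ^ s * Y ^ t * (F x ^ s / X ^ s * (G x ^ t / Y ^ t)) := by
          have := (Real.rpow_pos_of_pos hX s).ne'
          have := (Real.rpow_pos_of_pos hY t).ne'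
          field_simp
        _ ≤ _ := by gcongr
    have i1 : Integrable (fun x => s * (F x / X)) μ := (hF.div_const X).const_mul s
    have i2 : Integrable (fun x => t * (G x / Y)) μ := (hG.div_const Y).const_mul t
    refine (integral_mono hf ((i1.add i2).const_mul _) hb).trans (le_of_eq ?_)
    simp only [Pi.add_apply]
    rw [integral_const_mul, integral_add i1 i2, integral_const_mul, integral_const_mul,
      integral_div, integral_div, ← hXd, ← hYd, div_self hX.ne', div_self hY.ne']
    rw [mul_one, mul_one, hst, mul_one]

/-- Case `1 < p < 2`: with `κ_p = 2^{2-p}(3-p)`, `κ'_p = p-1` and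
`c'_p = 2^{p(p-2)/2} (κ'_p)^{p/2}`, if `𝓔_k(u,u), 𝓔_k(v,v) < ∞` and
`𝓔_k(u,u) + 𝓔_k(v,v) > 0` then `𝓔_k(u-v,u-v) < ∞`,
`D := 𝓔_k(u,u-v) - 𝓔_k(v,u-v)` is well defined and nonnegative,
`D ≤ κ_p 𝓔_k(u-v,u-v)` and
`D^{p/2} ≥ c'_p 𝓔_k(u-v,u-v)(𝓔_k(u,u)+𝓔_k(v,v))^{(p-2)/2}`. -/
theorem stmt_8 (d : ℕ) (hd : 1 ≤ d) (p : ℝ) (hp1 : 1 < p) (hp2 : p < 2) (κ κ' c' : ℝ)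
    (hκ : κ = (2 : ℝ) ^ (2 - p) * (3 - p))
    (hκ' : κ' = p - 1)
    (hc' : c' = (2 : ℝ) ^ (p * (p - 2) / 2) * κ' ^ (p / 2))
    (k : EuclideanSpace ℝ (Fin d) → EuclideanSpace ℝ (Fin d) → ℝ)
    (hk : Measurable fun z : EuclideanSpace ℝ (Fin d) × EuclideanSpace ℝ (Fin d) => k z.1 z.2)
    (hk0 : ∀ x y, 0 ≤ k x y)
    (u v : EuclideanSpace ℝ (Fin d) → ℝ) (hu : Measurable u) (hv : Measurable v)
    (hEu : Integrable fun z : EuclideanSpace ℝ (Fin d) × EuclideanSpace ℝ (Fin d) =>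
      |u z.1 - u z.2| ^ p * k z.1 z.2)
    (hEv : Integrable fun z : EuclideanSpace ℝ (Fin d) × EuclideanSpace ℝ (Fin d) =>
      |v z.1 - v z.2| ^ p * k z.1 z.2)
    (hS : 0 < nlDiag d p k u + nlDiag d p k v) :
    (Integrable fun z : EuclideanSpace ℝ (Fin d) × EuclideanSpace ℝ (Fin d) =>
      |(u - v) z.1 - (u - v) z.2| ^ p * k z.1 z.2) ∧
    (Integrable fun z : EuclideanSpace ℝ (Fin d) × EuclideanSpace ℝ (Fin d) =>
      |u z.1 - u z.2| ^ (p - 2) * (u z.1 - u z.2) * ((u - v) z.1 - (u - v) z.2) * k z.1 z.2) ∧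
    (Integrable fun z : EuclideanSpace ℝ (Fin d) × EuclideanSpace ℝ (Fin d) =>
      |v z.1 - v z.2| ^ (p - 2) * (v z.1 - v z.2) * ((u - v) z.1 - (u - v) z.2) * k z.1 z.2) ∧
    0 ≤ nlForm d p k u (u - v) - nlForm d p k v (u - v) ∧
    nlForm d p k u (u - v) - nlForm d p k v (u - v) ≤ κ * nlDiag d p k (u - v) ∧
    c' * nlDiag d p k (u - v) * (nlDiag d p k u + nlDiag d p k v) ^ ((p - 2) / 2) ≤
      (nlForm d p k u (u - v) - nlForm d p k v (u - v)) ^ (p / 2) := by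
  have hmu : Measurable fun z : EuclideanSpace ℝ (Fin d) × EuclideanSpace ℝ (Fin d) =>
      u z.1 - u z.2 := (hu.comp measurable_fst).sub (hu.comp measurable_snd)
  have hmv : Measurable fun z : EuclideanSpace ℝ (Fin d) × EuclideanSpace ℝ (Fin d) =>
      v z.1 - v z.2 := (hv.comp measurable_fst).sub (hv.comp measurable_snd)
  have hsub : ∀ x y, (u - v) x - (u - v) y = (u x - u y) - (v x - v y) := by
    intro x y; simp only [Pi.sub_apply]; ring
  unfold nlForm
  unfold nlDiag at *
  simp only [hsub]
  generalize hA : (fun z : EuclideanSpace ℝ (Fin d) × EuclideanSpace ℝ (Fin d) =>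
      u z.1 - u z.2) = A at hmu
  generalize hB : (fun z : EuclideanSpace ℝ (Fin d) × EuclideanSpace ℝ (Fin d) =>
      v z.1 - v z.2) = B at hmv
  generalize hK : (fun z : EuclideanSpace ℝ (Fin d) × EuclideanSpace ℝ (Fin d) =>
      k z.1 z.2) = K at hk
  have hA' : ∀ z : EuclideanSpace ℝ (Fin d) × EuclideanSpace ℝ (Fin d), u z.1 - u z.2 = A z :=
    fun z => congrFun hA z
  have hB' : ∀ z : EuclideanSpace ℝ (Fin d) × EuclideanSpace ℝ (Fin d), v z.1 - v z.2 = B z :=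
    fun z => congrFun hB z
  have hK' : ∀ z : EuclideanSpace ℝ (Fin d) × EuclideanSpace ℝ (Fin d), k z.1 z.2 = K z :=
    fun z => congrFun hK z
  have hK0 : ∀ z, 0 ≤ K z := fun z => by rw [← hK']; exact hk0 _ _
  simp only [hA', hB', hK'] at *
  have hGi : Integrable fun z => (|A z| ^ p + |B z| ^ p) * K z := by
    simp only [add_mul]; exact hEu.add hEv
  have hdom := hGi.const_mul (2 ^ p)
  have hE : Integrable fun z => |A z - B z| ^ p * K z := by
    refine hdom.mono' (by fun_prop) (Filter.Eventually.of_forall fun z => ?_)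
    have := hK0 z
    rw [Real.norm_eq_abs, abs_of_nonneg (by positivity), ← mul_assoc]
    gcongr
    exact diffpow p _ _ hp1
  have h1 : Integrable fun z => |A z| ^ (p - 2) * A z * (A z - B z) * K z := by
    refine hdom.mono' (by fun_prop) (Filter.Eventually.of_forall fun z => ?_)
    have := hK0 z
    rw [Real.norm_eq_abs, abs_mul, abs_of_nonneg this, ← mul_assoc]
    gcongr
    exact Jbd p _ _ hp1
  have h2 : Integrable fun z => |B z| ^ (p - 2) * B z * (A z - B z) * K z := by
    refine hdom.mono' (by fun_prop) (Filter.Eventually.of_forall fun z => ?_)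
    have := hK0 z
    rw [Real.norm_eq_abs, abs_mul, abs_of_nonneg this, ← mul_assoc]
    gcongr
    have := Jbd p (B z) (A z) hp1
    rw [abs_mul, abs_sub_comm, ← abs_mul, add_comm] at this
    exact this
  refine ⟨hE, h1, h2, ?_⟩
  rw [← integral_sub h1 h2]
  have hF := h1.sub h2
  set F := fun z => |A z| ^ (p - 2) * A z * (A z - B z) * K z -
    |B z| ^ (p - 2) * B z * (A z - B z) * K z with hFd
  have hF : Integrable F := hF
  have hFe : ∀ z, F z = (|A z| ^ (p - 2) * A z * (A z - B z) -
    |B z| ^ (p - 2) * B z * (A z - B z)) * K z := fun z => by simp only [hFd]; ring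
  have hF0 : ∀ z, 0 ≤ F z := fun z => by
    rw [hFe]
    refine mul_nonneg (le_trans ?_ (W p (A z) (B z) hp1 hp2).2) (hK0 z)
    have : 0 ≤ p - 1 := by linarith
    positivity
  refine ⟨integral_nonneg hF0, ?_, ?_⟩
  · rw [← integral_const_mul]
    refine integral_mono hF (hE.const_mul κ) fun z => ?_
    have := hK0 z
    show F z ≤ κ * (|A z - B z| ^ p * K z)
    rw [hFe, ← mul_assoc, hκ]
    exact mul_le_mul_of_nonneg_right (W p (A z) (B z) hp1 hp2).1 this
  · rw [← integral_add hEu hEv] at hS ⊢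
    simp only [← add_mul] at hS ⊢
    have := hold volume (fun z => c' * (|A z - B z| ^ p * K z)) F
      (fun z => (|A z| ^ p + |B z| ^ p) * K z) (p/2) ((2-p)/2) (by linarith) (by linarith)
      (by ring) (hE.const_mul c') hF hGi hF0
      (fun z => mul_nonneg (by positivity) (hK0 z)) hS
      (fun z => by
        rw [hFe, hc', hκ']
        exact ptw p _ _ _ _ hp1 hp2 (hK0 z) (W p (A z) (B z) hp1 hp2).2)
    rw [integral_const_mul] at this
    refine (mul_le_mul_of_nonneg_right this (Real.rpow_nonneg hS.le ((p-2)/2))).trans (le_of_eq ?_)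
    rw [mul_assoc, ← Real.rpow_add hS, show (2-p)/2 + (p-2)/2 = 0 by ring, Real.rpow_zero, mul_one]
end

section
/- Let $d \ge 1$ and $p \in (1,\infty)$. Set $\alpha_p = \max(1, p/2) - 1$ and $\beta_p = \min(1, p/2) - 1$, and set $\kappa_p = p-1$, $\kappa'_p = \min(2^{-1}, 2^{2-p})$ if $p \ge 2$, while $\kappa_p = 2^{2-p}(3-p)$, $\kappa'_p = p-1$ if $1 < p \le 2$. Let $k : \mathbb{R}^d \times \mathbb{R}^d \to [0,\infty)$ be measurable and $u, v : \mathbb{R}^d \to \mathbb{R}$ measurable with $\mathcal{E}_k(u,u) < \infty$, $\mathcal{E}_k(v,v) < \infty$ and $S := \mathcal{E}_k(u,u) + \mathcal{E}_k(v,v) > 0$. Then, with $D := \mathcal{E}_k(u,u-v) - \mathcal{E}_k(v,u-v) \ge 0$, one has $\frac{D^{\alpha_p+1}}{S^{\alpha_p}} \le 2^{p\alpha_p}\,\kappa_p^{\alpha_p+1}\, \mathcal{E}_k(u-v,u-v)$ and $\frac{D^{\beta_p+1}}{S^{\beta_p}} \ge 2^{p\beta_p}\,(\kappa'_p)^{\beta_p+1}\,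 \mathcal{E}_k(u-v,u-v)$. -/
open MeasureTheory

/-- odd power -/
noncomputable def JJ (p a : ℝ) : ℝ := |a| ^ (p - 2) * a

lemma JJ_neg (p a : ℝ) : JJ p (-a) = - JJ p a := by simp [JJ]

lemma JJ_nn {p a : ℝ} (hp : 1 < p) (ha : 0 ≤ a) : JJ p a = a ^ (p - 1) := by
  rcases ha.eq_or_lt with rfl | h
  · simp [JJ, Real.zero_rpow (by linarith : p - 1 ≠ 0)]
  · rw [JJ, abs_of_pos h, ← Real.rpow_add_one h.ne']; ring_nf

lemma red_aux (Q : ℝ → ℝ → Prop) (hs : ∀ a b, Q a b → Q b a) (hn : ∀ a b, Q a b → Q (-a) (-b))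
    (h1 : ∀ a b, 0 ≤ b → b ≤ a → Q a b) (h2 : ∀ a c, 0 ≤ c → c ≤ a → Q a (-c)) (a b : ℝ) :
    Q a b := by
  have key : ∀ a b, |b| ≤ a → Q a b := by
    intro a b h
    rcases le_total 0 b with hb | hb
    · rw [abs_of_nonneg hb] at h; exact h1 a b hb h
    · rw [abs_of_nonpos hb] at h
      simpa using h2 a (-b) (by linarith) h
  have key2 : ∀ a b, |b| ≤ |a| → Q a b := by
    intro a b h
    rcases le_total 0 a with ha | ha
    · rw [abs_of_nonneg ha] at h; exact key a b h
    · rw [abs_of_nonpos ha] at h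
      simpa using hn _ _ (key (-a) (-b) (by rwa [abs_neg]))
  rcases le_total |b| |a| with h | h
  · exact key2 a b h
  · exact hs _ _ (key2 b a h)

lemma pow_up {p a t : ℝ} (ha : 0 ≤ a) : 0 ≤ t → (t * a) ^ (p-1) = t ^ (p-1) * a ^ (p-1) :=
  fun ht => Real.mul_rpow ht ha

lemma pw_upper_ge {p : ℝ} (hp : 2 ≤ p) (a b : ℝ) :
    (JJ p a - JJ p b) * (a - b) ≤ (p - 1) * (max |a| |b|) ^ (p - 2) * (a - b) ^ 2 := by
  have hp1 : 1 < p := by linarith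
  refine red_aux (fun a b => (JJ p a - JJ p b) * (a - b) ≤
    (p - 1) * (max |a| |b|) ^ (p - 2) * (a - b) ^ 2) ?_ ?_ ?_ ?_ a b
  · intro a b h; rw [max_comm]; linarith
  · intro a b h; simp only [JJ_neg, abs_neg]; linarith
  · intro a b hb hba
    have ha : 0 ≤ a := hb.trans hba
    rw [abs_of_nonneg ha, abs_of_nonneg hb, max_eq_left hba, JJ_nn hp1 ha, JJ_nn hp1 hb]
    rcases ha.eq_or_lt with rfl | ha'
    · have : b = 0 := le_antisymm hba hb
      simp [this]
    obtain ⟨t, rfl⟩ : ∃ t, b = t * a := ⟨b / a, by field_simp⟩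
    have ht : 0 ≤ t := by by_contra h; push Not at h; nlinarith
    have hB := one_add_mul_self_le_rpow_one_add (s := t - 1) (by linarith)
      (p := p - 1) (by linarith)
    rw [show 1 + (t - 1) = t by ring] at hB
    rw [pow_up ha ht, show a ^ (p-1) = a ^ (p-2) * a by
      rw [← Real.rpow_add_one ha'.ne']; ring_nf]
    have h0 : 0 ≤ a ^ (p-2) * a * (a - t * a) :=
      mul_nonneg (by positivity) (by linarith)
    nlinarith
  · intro a c hc hca
    have ha : 0 ≤ a := hc.trans hca
    rw [abs_of_nonneg ha, abs_neg, abs_of_nonneg hc, max_eq_left hca, JJ_neg, JJ_nn hp1 ha,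
      JJ_nn hp1 hc]
    rcases ha.eq_or_lt with rfl | ha'
    · have : c = 0 := le_antisymm hca hc
      simp [this]
    have e1 : a ^ (p-1) = a ^ (p-2) * a := by
      rw [← Real.rpow_add_one ha'.ne']; ring_nf
    have e2 : c ^ (p-1) ≤ a ^ (p-2) * c := by
      rcases hc.eq_or_lt with rfl | hc'
      · simp [Real.zero_rpow (by linarith : p - 1 ≠ 0)]
      rw [show c ^ (p-1) = c ^ (p-2) * c by rw [← Real.rpow_add_one hc'.ne']; ring_nf]
      gcongr
    have h0 : 0 ≤ a ^ (p-2) := by positivity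
    have h3 : a ^ (p-1) + c ^ (p-1) ≤ a ^ (p-2) * (a + c) := by rw [e1]; linarith
    have h4 : (a ^ (p-1) + c ^ (p-1)) * (a + c) ≤ a ^ (p-2) * (a + c) * (a + c) := by
      gcongr
    have h5 : 0 ≤ (p - 2) * (a ^ (p-2) * (a + c) * (a + c)) :=
      mul_nonneg (by linarith) (by positivity)
    linarith

lemma pw_lower_le {p : ℝ} (hp1 : 1 < p) (hp : p ≤ 2) (a b : ℝ) :
    (p - 1) * (max |a| |b|) ^ (p - 2) * (a - b) ^ 2 ≤ (JJ p a - JJ p b) * (a - b) := by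
  refine red_aux (fun a b => (p - 1) * (max |a| |b|) ^ (p - 2) * (a - b) ^ 2 ≤
    (JJ p a - JJ p b) * (a - b)) ?_ ?_ ?_ ?_ a b
  · intro a b h; rw [max_comm]; linarith
  · intro a b h; simp only [JJ_neg, abs_neg]; linarith
  · intro a b hb hba
    have ha : 0 ≤ a := hb.trans hba
    rw [abs_of_nonneg ha, abs_of_nonneg hb, max_eq_left hba, JJ_nn hp1 ha, JJ_nn hp1 hb]
    rcases ha.eq_or_lt with rfl | ha'
    · have : b = 0 := le_antisymm hba hb
      simp [this]
    obtain ⟨t, rfl⟩ : ∃ t, b = t * a := ⟨b / a, by field_simp⟩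
    have ht : 0 ≤ t := by by_contra h; push Not at h; nlinarith
    have hB := rpow_one_add_le_one_add_mul_self (s := t - 1) (by linarith)
      (p := p - 1) (by linarith) (by linarith)
    rw [show 1 + (t - 1) = t by ring] at hB
    rw [pow_up ha ht, show a ^ (p-1) = a ^ (p-2) * a by
      rw [← Real.rpow_add_one ha'.ne']; ring_nf]
    have h0 : 0 ≤ a ^ (p-2) * a * (a - t * a) :=
      mul_nonneg (by positivity) (by linarith)
    nlinarith
  · intro a c hc hca
    have ha : 0 ≤ a := hc.trans hca
    rw [abs_of_nonneg ha, abs_neg, abs_of_nonneg hc, max_eq_left hca, JJ_neg, JJ_nn hp1 ha,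
      JJ_nn hp1 hc]
    rcases ha.eq_or_lt with rfl | ha'
    · have : c = 0 := le_antisymm hca hc
      simp [this]
    have e1 : a ^ (p-1) = a ^ (p-2) * a := by
      rw [← Real.rpow_add_one ha'.ne']; ring_nf
    have e2 : a ^ (p-2) * c ≤ c ^ (p-1) := by
      rcases hc.eq_or_lt with rfl | hc'
      · simp [Real.zero_rpow (by linarith : p - 1 ≠ 0)]
      rw [show c ^ (p-1) = c ^ (p-2) * c by rw [← Real.rpow_add_one hc'.ne']; ring_nf]
      gcongr ?_ * c
      exact Real.rpow_le_rpow_of_nonpos hc' hca (by linarith)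
    have h3 : a ^ (p-2) * (a + c) ≤ a ^ (p-1) + c ^ (p-1) := by rw [e1]; linarith
    have h4 : a ^ (p-2) * (a + c) * (a + c) ≤ (a ^ (p-1) + c ^ (p-1)) * (a + c) := by
      gcongr
    have h5 : 0 ≤ (2 - p) * (a ^ (p-2) * (a + c) * (a + c)) :=
      mul_nonneg (by linarith) (by positivity)
    linarith

lemma real_conv {q x y : ℝ} (hx : 0 ≤ x) (hy : 0 ≤ y) (hq : 1 ≤ q) :
    (x + y) ^ q ≤ (2:ℝ) ^ (q - 1) * (x ^ q + y ^ q) := by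
  lift x to NNReal using hx
  lift y to NNReal using hy
  exact_mod_cast NNReal.rpow_add_le_mul_rpow_add_rpow x y hq

lemma real_super {q x y : ℝ} (hx : 0 ≤ x) (hy : 0 ≤ y) (hq : 1 ≤ q) :
    x ^ q + y ^ q ≤ (x + y) ^ q := by
  lift x to NNReal using hx
  lift y to NNReal using hy
  exact_mod_cast NNReal.add_rpow_le_rpow_add x y hq

lemma real_conc {q x y : ℝ} (hx : 0 ≤ x) (hy : 0 ≤ y) (hq0 : 0 < q) (hq : q ≤ 1) :
    x ^ q + y ^ q ≤ (2:ℝ) ^ (1 - q) * (x + y) ^ q := by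
  have h := real_conv (q := q⁻¹) (x := x ^ q) (y := y ^ q) (by positivity) (by positivity)
    ((one_le_inv₀ hq0).2 hq)
  rw [Real.rpow_rpow_inv hx hq0.ne', Real.rpow_rpow_inv hy hq0.ne'] at h
  have h2 := Real.rpow_le_rpow (by positivity) h hq0.le
  rw [Real.rpow_inv_rpow (by positivity) hq0.ne', Real.mul_rpow (by positivity) (by positivity),
    ← Real.rpow_mul (by norm_num), sub_mul, inv_mul_cancel₀ hq0.ne', one_mul] at h2
  exact h2

lemma abs_split {p w : ℝ} (hp : 1 < p) (hw : 0 ≤ w) : |w| ^ p = w ^ (p - 1) * w := by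
  rw [abs_of_nonneg hw]
  rcases hw.eq_or_lt with rfl | h
  · simp [Real.zero_rpow (by linarith : p ≠ 0)]
  · rw [← Real.rpow_add_one h.ne']; ring_nf

lemma pw_lower_ge {p : ℝ} (hp : 2 ≤ p) (a b : ℝ) :
    (2:ℝ) ^ (2 - p) * |a - b| ^ p ≤ (JJ p a - JJ p b) * (a - b) := by
  have hp1 : 1 < p := by linarith
  refine red_aux (fun a b => (2:ℝ) ^ (2 - p) * |a - b| ^ p ≤ (JJ p a - JJ p b) * (a - b))
    ?_ ?_ ?_ ?_ a b
  · intro a b h; rw [abs_sub_comm]; linarith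
  · intro a b h; rw [JJ_neg, JJ_neg, show -a - -b = -(a - b) by ring, abs_neg]; linarith
  · intro a b hb hba
    have ha : 0 ≤ a := hb.trans hba
    have hw : 0 ≤ a - b := by linarith
    rw [abs_split hp1 hw, JJ_nn hp1 ha, JJ_nn hp1 hb, ← mul_assoc]
    have h := real_super (q := p - 1) hw hb (by linarith)
    rw [sub_add_cancel] at h
    have h2 : (2:ℝ) ^ (2 - p) ≤ 1 :=
      Real.rpow_le_one_of_one_le_of_nonpos (by norm_num) (by linarith)
    have h3 : (2:ℝ) ^ (2 - p) * (a - b) ^ (p-1) ≤ 1 * (a - b) ^ (p-1) := by gcongr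
    gcongr
    linarith
  · intro a c hc hca
    have ha : 0 ≤ a := hc.trans hca
    rw [sub_neg_eq_add, abs_split hp1 (by linarith), JJ_neg, JJ_nn hp1 ha, JJ_nn hp1 hc,
      ← mul_assoc, sub_neg_eq_add]
    gcongr
    have h := real_conv (q := p - 1) ha hc (by linarith)
    calc (2:ℝ) ^ (2 - p) * (a + c) ^ (p-1)
        ≤ (2:ℝ) ^ (2 - p) * ((2:ℝ) ^ (p - 1 - 1) * (a ^ (p-1) + c ^ (p-1))) := by gcongr
      _ = a ^ (p-1) + c ^ (p-1) := by
        rw [← mul_assoc, ← Real.rpow_add (by norm_num)]; ring_nf; simp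

lemma pw_upper_le {p : ℝ} (hp1 : 1 < p) (hp : p ≤ 2) (a b : ℝ) :
    (JJ p a - JJ p b) * (a - b) ≤ (2:ℝ) ^ (2 - p) * |a - b| ^ p := by
  refine red_aux (fun a b => (JJ p a - JJ p b) * (a - b) ≤ (2:ℝ) ^ (2 - p) * |a - b| ^ p)
    ?_ ?_ ?_ ?_ a b
  · intro a b h; rw [abs_sub_comm]; linarith
  · intro a b h; rw [JJ_neg, JJ_neg, show -a - -b = -(a - b) by ring, abs_neg]; linarith
  · intro a b hb hba
    have ha : 0 ≤ a := hb.trans hba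
    have hw : 0 ≤ a - b := by linarith
    rw [abs_split hp1 hw, JJ_nn hp1 ha, JJ_nn hp1 hb, ← mul_assoc]
    have h := Real.rpow_add_le_add_rpow (p := p - 1) hw hb (by linarith) (by linarith)
    rw [sub_add_cancel] at h
    have h2 : 1 ≤ (2:ℝ) ^ (2 - p) := Real.one_le_rpow (by norm_num) (by linarith)
    have h3 : 1 * (a - b) ^ (p-1) ≤ (2:ℝ) ^ (2 - p) * (a - b) ^ (p-1) := by gcongr
    gcongr
    linarith
  · intro a c hc hca
    have ha : 0 ≤ a := hc.trans hca
    rw [sub_neg_eq_add, abs_split hp1 (by linarith), JJ_neg, JJ_nn hp1 ha, JJ_nn hp1 hc,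
      ← mul_assoc, sub_neg_eq_add]
    gcongr
    have h := real_conc (q := p - 1) ha hc (by linarith) (by linarith)
    rwa [show 1 - (p - 1) = 2 - p by ring] at h

lemma holder_real {X : Type*} [MeasurableSpace X] {μ : Measure X} {f g : X → ℝ} {s t : ℝ}
    (hs : 0 ≤ s) (ht : 0 ≤ t) (hst : s + t = 1) (hf0 : ∀ x, 0 ≤ f x) (hg0 : ∀ x, 0 ≤ g x)
    (hf : Integrable f μ) (hg : Integrable g μ) {h : X → ℝ} (hh : Integrable h μ)
    (hh0 : ∀ x, 0 ≤ h x) (hle : ∀ x, h x ≤ f x ^ s * g x ^ t) :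
    ∫ x, h x ∂μ ≤ (∫ x, f x ∂μ) ^ s * (∫ x, g x ∂μ) ^ t := by
  have If : 0 ≤ ∫ x, f x ∂μ := integral_nonneg hf0
  have Ig : 0 ≤ ∫ x, g x ∂μ := integral_nonneg hg0
  have key : ENNReal.ofReal (∫ x, h x ∂μ) ≤
      ENNReal.ofReal ((∫ x, f x ∂μ) ^ s * (∫ x, g x ∂μ) ^ t) := by
    rw [ENNReal.ofReal_mul (by positivity), ← ENNReal.ofReal_rpow_of_nonneg If hs,
      ← ENNReal.ofReal_rpow_of_nonneg Ig ht,
      ofReal_integral_eq_lintegral_ofReal hh (Filter.Eventually.of_forall hh0),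
      ofReal_integral_eq_lintegral_ofReal hf (Filter.Eventually.of_forall hf0),
      ofReal_integral_eq_lintegral_ofReal hg (Filter.Eventually.of_forall hg0)]
    refine le_trans (lintegral_mono fun x => ?_)
      (ENNReal.lintegral_mul_norm_pow_le hf.aemeasurable.ennreal_ofReal
        hg.aemeasurable.ennreal_ofReal hs ht hst)
    simp only
    rw [ENNReal.ofReal_rpow_of_nonneg (hf0 x) hs, ENNReal.ofReal_rpow_of_nonneg (hg0 x) ht,
      ← ENNReal.ofReal_mul (Real.rpow_nonneg (hf0 x) _)]
    exact ENNReal.ofReal_le_ofReal (hle x)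
  exact (ENNReal.ofReal_le_ofReal_iff (by positivity)).1 key

lemma max_pow_le {p : ℝ} (hp1 : 1 < p) (a b : ℝ) : (max |a| |b|) ^ p ≤ |a| ^ p + |b| ^ p := by
  have h1 : 0 ≤ |a| ^ p := by positivity
  have h2 : 0 ≤ |b| ^ p := by positivity
  rcases max_choice |a| |b| with h | h <;> rw [h] <;> linarith

lemma sub_pow_le {p : ℝ} (hp1 : 1 < p) (a b : ℝ) :
    |a - b| ^ p ≤ (2:ℝ) ^ p * (|a| ^ p + |b| ^ p) := by
  have h : |a - b| ≤ 2 * max |a| |b| := by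
    have := abs_sub a b
    linarith [le_max_left |a| |b|, le_max_right |a| |b|]
  calc |a - b| ^ p ≤ (2 * max |a| |b|) ^ p := by gcongr
    _ = 2 ^ p * (max |a| |b|) ^ p := Real.mul_rpow (by norm_num) (by positivity)
    _ ≤ _ := by gcongr; exact max_pow_le hp1 a b

lemma JJ_mul_le {p : ℝ} (hp1 : 1 < p) (a b : ℝ) :
    |JJ p a * (a - b)| ≤ 2 * (|a| ^ p + |b| ^ p) := by
  have e : |JJ p a| = |a| ^ (p - 1) := by
    rw [← JJ_nn hp1 (abs_nonneg a), JJ, JJ, abs_mul, abs_abs, abs_of_nonneg (by positivity)]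
  have h : |a - b| ≤ 2 * max |a| |b| := by
    have := abs_sub a b
    linarith [le_max_left |a| |b|, le_max_right |a| |b|]
  have h0 : 0 ≤ max |a| |b| := by positivity
  rw [abs_mul, e]
  calc |a| ^ (p - 1) * |a - b| ≤ (max |a| |b|) ^ (p-1) * (2 * max |a| |b|) := by
        gcongr
        exact le_max_left _ _
    _ = 2 * (max |a| |b|) ^ p := by
        have := abs_split hp1 h0
        rw [abs_of_nonneg h0] at this
        rw [this]; ring
    _ ≤ _ := by gcongr; exact max_pow_le hp1 a b

lemma hol_up {p : ℝ} (hp : 2 ≤ p) (a b k : ℝ) (hk : 0 ≤ k) :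
    (p - 1)⁻¹ * ((JJ p a - JJ p b) * (a - b) * k) ≤
      ((|a| ^ p + |b| ^ p) * k) ^ ((p - 2) / p) * (|a - b| ^ p * k) ^ (2 / p) := by
  have hp0 : 0 < p := by linarith
  have h0 : 0 ≤ max |a| |b| := by positivity
  have e : ((max |a| |b|) ^ p * k) ^ ((p - 2) / p) * (|a - b| ^ p * k) ^ (2 / p) =
      (max |a| |b|) ^ (p - 2) * (a - b) ^ 2 * k := by
    rw [Real.mul_rpow (by positivity) hk, Real.mul_rpow (by positivity) hk,
      ← Real.rpow_mul h0, ← Real.rpow_mul (abs_nonneg _), mul_div_cancel₀ _ hp0.ne',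
      mul_div_cancel₀ _ hp0.ne', mul_mul_mul_comm, ← Real.rpow_add_of_nonneg hk
        (div_nonneg (by linarith) hp0.le) (by positivity),
      show (p - 2) / p + 2 / p = 1 by field_simp; ring, Real.rpow_one, Real.rpow_two, sq_abs]
  have h1 : ((max |a| |b|) ^ p * k) ^ ((p - 2) / p) ≤
      ((|a| ^ p + |b| ^ p) * k) ^ ((p - 2) / p) := by
    apply Real.rpow_le_rpow (by positivity) _ (div_nonneg (by linarith) hp0.le)
    gcongr; exact max_pow_le (by linarith) a b
  refine le_trans ?_ (mul_le_mul_of_nonneg_right h1 (by positivity))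
  rw [e, inv_mul_le_iff₀ (by linarith)]
  calc _ ≤ ((p - 1) * (max |a| |b|) ^ (p - 2) * (a - b) ^ 2) * k :=
        mul_le_mul_of_nonneg_right (pw_upper_ge hp a b) hk
    _ = _ := by ring

lemma hol_lo {p : ℝ} (hp1 : 1 < p) (hp : p ≤ 2) (a b k : ℝ) (hk : 0 ≤ k) :
    (p - 1) ^ (p / 2) * (|a - b| ^ p * k) ≤
      ((JJ p a - JJ p b) * (a - b) * k) ^ (p / 2) * ((|a| ^ p + |b| ^ p) * k) ^ (1 - p / 2) := by
  have hp0 : 0 < p := by linarith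
  have h0 : 0 ≤ max |a| |b| := by positivity
  have hq : 0 ≤ p - 1 := by linarith
  have hP := pw_lower_le hp1 hp a b
  have hP0 : 0 ≤ (JJ p a - JJ p b) * (a - b) := le_trans (by positivity) hP
  rcases h0.eq_or_lt with h | hM
  · have h1 := le_max_left |a| |b|
    have h2 := le_max_right |a| |b|
    rw [← h] at h1 h2
    have ea : a = 0 := abs_eq_zero.1 (le_antisymm h1 (abs_nonneg _))
    have eb : b = 0 := abs_eq_zero.1 (le_antisymm h2 (abs_nonneg _))
    have : (p - 1) ^ (p / 2) * (|a - b| ^ p * k) = 0 := by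
      rw [ea, eb]; simp [Real.zero_rpow hp0.ne']
    rw [this]
    positivity
  have e : ((p - 1) * (max |a| |b|) ^ (p - 2) * (a - b) ^ 2 * k) ^ (p / 2) *
      ((max |a| |b|) ^ p * k) ^ (1 - p / 2) = (p - 1) ^ (p / 2) * (|a - b| ^ p * k) := by
    rw [Real.mul_rpow (by positivity) hk, Real.mul_rpow (by positivity) hk,
      Real.mul_rpow (by positivity) (by positivity), Real.mul_rpow hq (by positivity),
      ← Real.rpow_mul h0, ← Real.rpow_mul h0, ← sq_abs (a - b), ← Real.rpow_two,
      ← Real.rpow_mul (abs_nonneg _), mul_div_cancel₀ _ (two_ne_zero)]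
    have e1 : (max |a| |b|) ^ ((p - 2) * (p / 2)) * (max |a| |b|) ^ (p * (1 - p / 2)) = 1 := by
      rw [← Real.rpow_add hM]; ring_nf; simp
    have e2 : k ^ (p / 2) * k ^ (1 - p / 2) = k := by
      rw [← Real.rpow_add_of_nonneg hk (by positivity) (by linarith)]; ring_nf; simp
    calc _ = (p - 1) ^ (p / 2) * |a - b| ^ p *
          ((max |a| |b|) ^ ((p - 2) * (p / 2)) * (max |a| |b|) ^ (p * (1 - p / 2))) *
          (k ^ (p / 2) * k ^ (1 - p / 2)) := by ring
      _ = _ := by rw [e1, e2]; ring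
  rw [← e]
  have h1 := max_pow_le hp1 a b
  have h2 : 0 ≤ 1 - p / 2 := by linarith
  gcongr

lemma main_abs {X : Type*} [MeasurableSpace X] {μ : Measure X} (p : ℝ) (hp : 1 < p)
    (α β κ κ' : ℝ)
    (hα : α = max 1 (p / 2) - 1) (hβ : β = min 1 (p / 2) - 1)
    (hκ : κ = if 2 ≤ p then p - 1 else (2 : ℝ) ^ (2 - p) * (3 - p))
    (hκ' : κ' = if 2 ≤ p then min (2⁻¹ : ℝ) ((2 : ℝ) ^ (2 - p)) else p - 1)
    (A B K : X → ℝ) (hA : Measurable A) (hB : Measurable B) (hK : Measurable K)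
    (hK0 : ∀ x, 0 ≤ K x)
    (hEu : Integrable (fun x => |A x| ^ p * K x) μ)
    (hEv : Integrable (fun x => |B x| ^ p * K x) μ)
    (D S E : ℝ)
    (hD : D = (∫ x, JJ p (A x) * (A x - B x) * K x ∂μ) - ∫ x, JJ p (B x) * (A x - B x) * K x ∂μ)
    (hS : S = (∫ x, |A x| ^ p * K x ∂μ) + ∫ x, |B x| ^ p * K x ∂μ)
    (hE : E = ∫ x, |A x - B x| ^ p * K x ∂μ)
    (hS0 : 0 < S) :
    0 ≤ D ∧ D ^ (α + 1) / S ^ α ≤ (2 : ℝ) ^ (p * α) * κ ^ (α + 1) * E ∧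
      (2 : ℝ) ^ (p * β) * κ' ^ (β + 1) * E ≤ D ^ (β + 1) / S ^ β := by
  have hp0 : 0 < p := by linarith
  have mJ : ∀ f : X → ℝ, Measurable f → Measurable fun x => JJ p (f x) := by
    intro f hf; unfold JJ
    exact ((measurable_norm.comp hf).pow_const (p - 2)).mul hf
  have mJA := mJ A hA
  have mJB := mJ B hB
  have iS : Integrable (fun x => (|A x| ^ p + |B x| ^ p) * K x) μ := by
    have := hEu.add hEv
    refine this.congr (Filter.Eventually.of_forall fun x => ?_)
    simp only [Pi.add_apply]; ring
  have i1 : Integrable (fun x => JJ p (A x) * (A x - B x) * K x) μ := by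
    refine (iS.const_mul 2).mono' (by fun_prop) (Filter.Eventually.of_forall fun x => ?_)
    rw [Real.norm_eq_abs, abs_mul, abs_of_nonneg (hK0 x), ← mul_assoc]
    exact mul_le_mul_of_nonneg_right (JJ_mul_le hp _ _) (hK0 x)
  have i2 : Integrable (fun x => JJ p (B x) * (A x - B x) * K x) μ := by
    refine (iS.const_mul 2).mono' (by fun_prop) (Filter.Eventually.of_forall fun x => ?_)
    rw [Real.norm_eq_abs, abs_mul, abs_of_nonneg (hK0 x), ← mul_assoc]
    refine mul_le_mul_of_nonneg_right ?_ (hK0 x)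
    have := JJ_mul_le hp (B x) (A x)
    rw [abs_mul, abs_sub_comm, ← abs_mul] at this
    linarith
  have iD : Integrable (fun x => (JJ p (A x) - JJ p (B x)) * (A x - B x) * K x) μ := by
    refine (i1.sub i2).congr (Filter.Eventually.of_forall fun x => ?_)
    simp only [Pi.sub_apply]; ring
  have iE : Integrable (fun x => |A x - B x| ^ p * K x) μ := by
    have mm : Measurable (fun x => |A x - B x| ^ p * K x) :=
      ((measurable_norm.comp (hA.sub hB)).pow_const p).mul hK
    refine (iS.const_mul ((2:ℝ) ^ p)).mono' mm.aestronglyMeasurable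
      (Filter.Eventually.of_forall fun x => ?_)
    rw [Real.norm_eq_abs, abs_mul, abs_of_nonneg (hK0 x), ← mul_assoc,
      abs_of_nonneg (by positivity)]
    exact mul_le_mul_of_nonneg_right (sub_pow_le hp _ _) (hK0 x)
  have eD : D = ∫ x, (JJ p (A x) - JJ p (B x)) * (A x - B x) * K x ∂μ := by
    rw [hD, ← integral_sub i1 i2]
    congr 1; ext x; ring
  have eS : S = ∫ x, (|A x| ^ p + |B x| ^ p) * K x ∂μ := by
    rw [hS, ← integral_add hEu hEv]
    congr 1; ext x; ring
  have pos : ∀ x, 0 ≤ (JJ p (A x) - JJ p (B x)) * (A x - B x) * K x := by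
    intro x
    refine mul_nonneg ?_ (hK0 x)
    rcases le_total 2 p with h | h
    · exact le_trans (by positivity) (pw_lower_ge h (A x) (B x))
    · refine le_trans ?_ (pw_lower_le hp h (A x) (B x))
      have : 0 ≤ p - 1 := by linarith
      positivity
  have posS : ∀ x, 0 ≤ (|A x| ^ p + |B x| ^ p) * K x := fun x =>
    mul_nonneg (by positivity) (hK0 x)
  have posE : ∀ x, 0 ≤ |A x - B x| ^ p * K x := fun x =>
    mul_nonneg (by positivity) (hK0 x)
  have hD0 : 0 ≤ D := by rw [eD]; exact integral_nonneg pos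
  have hE0 : 0 ≤ E := by rw [hE]; exact integral_nonneg posE
  refine ⟨hD0, ?_⟩
  by_cases h2 : 2 ≤ p
  · rw [if_pos h2] at hκ hκ'
    rw [max_eq_right (by linarith)] at hα
    rw [min_eq_left (by linarith)] at hβ
    subst hα hκ
    constructor
    · have hq : 0 < p - 1 := by linarith
      have H := holder_real (μ := μ) (s := (p - 2) / p) (t := 2 / p)
        (div_nonneg (by linarith) hp0.le) (by positivity) (by field_simp; ring) posS posE iS iE
        (iD.const_mul (p - 1)⁻¹) (fun x => mul_nonneg (by positivity) (pos x))
        (fun x => hol_up h2 (A x) (B x) (K x) (hK0 x))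
      rw [integral_const_mul, ← eD, ← eS, ← hE, inv_mul_le_iff₀ hq] at H
      have H2 := Real.rpow_le_rpow hD0 H (by positivity : 0 ≤ p / 2)
      rw [Real.mul_rpow hq.le (by positivity), Real.mul_rpow (by positivity) (by positivity),
        ← Real.rpow_mul hS0.le, ← Real.rpow_mul hE0,
        show (p - 2) / p * (p / 2) = p / 2 - 1 by field_simp,
        show 2 / p * (p / 2) = 1 by field_simp, Real.rpow_one] at H2
      rw [sub_add_cancel, div_le_iff₀ (by positivity)]
      have h3 : 1 ≤ (2:ℝ) ^ (p * (p / 2 - 1)) :=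
        Real.one_le_rpow (by norm_num) (mul_nonneg hp0.le (by linarith))
      have h4 : 0 ≤ (p - 1) ^ (p / 2) * (S ^ (p / 2 - 1) * E) := by positivity
      nlinarith
    · rw [hβ]
      simp only [sub_self, mul_zero, Real.rpow_zero, zero_add, Real.rpow_one, one_mul, div_one]
      rw [eD, hE, ← integral_const_mul]
      refine integral_mono (iE.const_mul _) iD fun x => ?_
      simp only
      rw [← mul_assoc]
      refine mul_le_mul_of_nonneg_right (le_trans ?_ (pw_lower_ge h2 (A x) (B x))) (hK0 x)
      refine mul_le_mul_of_nonneg_right ?_ (by positivity)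
      rw [hκ']; exact min_le_right _ _
  · rw [if_neg h2] at hκ hκ'
    push Not at h2
    rw [max_eq_left (by linarith)] at hα
    rw [min_eq_right (by linarith)] at hβ
    subst hβ hκ'
    constructor
    · rw [hα]
      simp only [sub_self, mul_zero, Real.rpow_zero, zero_add, Real.rpow_one, one_mul, div_one]
      rw [eD, hE, ← integral_const_mul]
      refine integral_mono iD (iE.const_mul _) fun x => ?_
      simp only
      rw [← mul_assoc]
      refine mul_le_mul_of_nonneg_right (le_trans (pw_upper_le hp h2.le (A x) (B x)) ?_) (hK0 x)
      refine mul_le_mul_of_nonneg_right ?_ (by positivity)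
      rw [hκ]
      exact le_mul_of_one_le_right (by positivity) (by linarith)
    · have hq : 0 < p - 1 := by linarith
      have H := holder_real (μ := μ) (s := p / 2) (t := 1 - p / 2)
        (by positivity) (by linarith) (by ring) pos posS iD iS
        (iE.const_mul ((p - 1) ^ (p / 2))) (fun x => mul_nonneg (by positivity) (posE x))
        (fun x => hol_lo hp h2.le (A x) (B x) (K x) (hK0 x))
      rw [integral_const_mul, ← eD, ← eS, ← hE] at H
      rw [sub_add_cancel, div_eq_mul_inv (D ^ (p / 2)), ← Real.rpow_neg hS0.le, neg_sub]
      refine le_trans ?_ H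
      have h3 : (2:ℝ) ^ (p * (p / 2 - 1)) ≤ 1 :=
        Real.rpow_le_one_of_one_le_of_nonpos (by norm_num)
          (mul_nonpos_of_nonneg_of_nonpos hp0.le (by linarith))
      rw [mul_assoc]
      exact mul_le_of_le_one_left (by positivity) h3

/-- Mixed-exponent linearization estimates: with
`α_p = max(1,p/2)-1`, `β_p = min(1,p/2)-1`, and `κ_p, κ'_p` as in the two cases,
if `S = 𝓔_k(u,u)+𝓔_k(v,v) ∈ (0,∞)` then, with `D = 𝓔_k(u,u-v)-𝓔_k(v,u-v) ≥ 0`,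
`D^{α_p+1}/S^{α_p} ≤ 2^{pα_p} κ_p^{α_p+1} 𝓔_k(u-v,u-v)` and
`D^{β_p+1}/S^{β_p} ≥ 2^{pβ_p} (κ'_p)^{β_p+1} 𝓔_k(u-v,u-v)`. -/
theorem stmt_9 (d : ℕ) (hd : 1 ≤ d) (p : ℝ) (hp : 1 < p) (α β κ κ' : ℝ)
    (hα : α = max 1 (p / 2) - 1) (hβ : β = min 1 (p / 2) - 1)
    (hκ : κ = if 2 ≤ p then p - 1 else (2 : ℝ) ^ (2 - p) * (3 - p))
    (hκ' : κ' = if 2 ≤ p then min (2⁻¹ : ℝ) ((2 : ℝ) ^ (2 - p)) else p - 1)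
    (k : EuclideanSpace ℝ (Fin d) → EuclideanSpace ℝ (Fin d) → ℝ)
    (hk : Measurable fun z : EuclideanSpace ℝ (Fin d) × EuclideanSpace ℝ (Fin d) => k z.1 z.2)
    (hk0 : ∀ x y, 0 ≤ k x y)
    (u v : EuclideanSpace ℝ (Fin d) → ℝ) (hu : Measurable u) (hv : Measurable v)
    (hEu : Integrable fun z : EuclideanSpace ℝ (Fin d) × EuclideanSpace ℝ (Fin d) =>
      |u z.1 - u z.2| ^ p * k z.1 z.2)
    (hEv : Integrable fun z : EuclideanSpace ℝ (Fin d) × EuclideanSpace ℝ (Fin d) =>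
      |v z.1 - v z.2| ^ p * k z.1 z.2)
    (hS : 0 < nlDiag d p k u + nlDiag d p k v) :
    0 ≤ nlForm d p k u (u - v) - nlForm d p k v (u - v) ∧
    (nlForm d p k u (u - v) - nlForm d p k v (u - v)) ^ (α + 1) /
        (nlDiag d p k u + nlDiag d p k v) ^ α ≤
      (2 : ℝ) ^ (p * α) * κ ^ (α + 1) * nlDiag d p k (u - v) ∧
    (2 : ℝ) ^ (p * β) * κ' ^ (β + 1) * nlDiag d p k (u - v) ≤
      (nlForm d p k u (u - v) - nlForm d p k v (u - v)) ^ (β + 1) /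
        (nlDiag d p k u + nlDiag d p k v) ^ β := by
  have e : ∀ z : EuclideanSpace ℝ (Fin d) × EuclideanSpace ℝ (Fin d),
      (u - v) z.1 - (u - v) z.2 = (u z.1 - u z.2) - (v z.1 - v z.2) := by
    intro z; simp only [Pi.sub_apply]; ring
  refine main_abs p hp α β κ κ' hα hβ hκ hκ'
    (fun z : EuclideanSpace ℝ (Fin d) × EuclideanSpace ℝ (Fin d) => u z.1 - u z.2)
    (fun z => v z.1 - v z.2) (fun z => k z.1 z.2)
    ((hu.comp measurable_fst).sub (hu.comp measurable_snd))
    ((hv.comp measurable_fst).sub (hv.comp measurable_snd)) hk (fun z => hk0 _ _) hEu hEv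
    _ _ _ ?_ rfl ?_ hS
  · simp only [nlForm, JJ, e]
  · simp only [nlDiag, e]
end

section
/- Let $d \ge 1$ and $p \in (1,\infty)$. For each $\varepsilon \in (0,1)$ let $k_\varepsilon : \mathbb{R}^d \times \mathbb{R}^d \to [0,\infty)$ be measurable and let $u_\varepsilon : \mathbb{R}^d \to \mathbb{R}$ be measurable; let $u : \mathbb{R}^d \to \mathbb{R}$ be measurable. Assume $\sup_{\varepsilon \in (0,1)}\big(\mathcal{E}_{k_\varepsilon}(u_\varepsilon,u_\varepsilon) + \mathcal{E}_{k_\varepsilon}(u,u)\big) < \infty$. Then $\mathcal{E}_{k_\varepsilon}(u_\varepsilon - u,\, u_\varepsilon - u) \to 0$ as $\varepsilon \to 0^+$ if and only if $\mathcal{E}_{k_\varepsilon}(u_\varepsilon,\, u_\varepsilon - u) - \mathcal{E}_{k_\varepsilon}(u,\, u_\varepsilon - u) \to 0$ as $\varepsilon \to 0^+$. (Under the stated boundedness all these quantities are finite and well defined.) -/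
open MeasureTheory Filter
open scoped ENNReal Topology

/-- The energy `𝓔_k(u,u) = ∫∫ |u(x)-u(y)|^p k(x,y) dy dx ∈ [0,∞]`. -/
noncomputable def nlEnergy (d : ℕ) (p : ℝ)
    (k : EuclideanSpace ℝ (Fin d) → EuclideanSpace ℝ (Fin d) → ℝ)
    (u : EuclideanSpace ℝ (Fin d) → ℝ) : ℝ≥0∞ :=
  ∫⁻ z : EuclideanSpace ℝ (Fin d) × EuclideanSpace ℝ (Fin d),
    ENNReal.ofReal (|u z.1 - u z.2| ^ p * k z.1 z.2)


namespace NL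

noncomputable def phi (p t : ℝ) : ℝ := |t| ^ (p - 2) * t

lemma phi_eq {p : ℝ} (hp : 1 < p) (t : ℝ) :
    phi p t = (max t 0) ^ (p - 1) - (max (-t) 0) ^ (p - 1) := by
  have h0 : (0 : ℝ) ^ (p - 1) = 0 := Real.zero_rpow (by linarith)
  unfold phi
  rcases lt_trichotomy t 0 with h | h | h
  · rw [abs_of_neg h, max_eq_right h.le, max_eq_left (by linarith), h0,
      show p - 1 = (p - 2) + 1 by ring, Real.rpow_add_one (by linarith)]
    ring
  · subst h; simp
  · rw [abs_of_pos h, max_eq_left h.le, max_eq_right (by linarith), h0,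
      show p - 1 = (p - 2) + 1 by ring, Real.rpow_add_one (by linarith)]
    ring

lemma phi_cont {p : ℝ} (hp : 1 < p) : Continuous (phi p) := by
  have : phi p = fun t => (max t 0) ^ (p - 1) - (max (-t) 0) ^ (p - 1) := funext (phi_eq hp)
  rw [this]
  have h1 : 0 ≤ p - 1 := by linarith
  exact ((continuous_id.max continuous_const).rpow_const (fun _ => Or.inr h1)).sub
    ((continuous_neg.max continuous_const).rpow_const (fun _ => Or.inr h1))

lemma phi_mono {p : ℝ} (hp : 1 < p) : StrictMono (phi p) := by
  intro a b hab
  have h1 : 0 < p - 1 := by linarith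
  rw [phi_eq hp, phi_eq hp]
  have e1 : (max a 0) ^ (p - 1) ≤ (max b 0) ^ (p - 1) :=
    Real.rpow_le_rpow (le_max_right _ _) (max_le_max_right 0 hab.le) h1.le
  have e2 : (max (-b) 0) ^ (p - 1) ≤ (max (-a) 0) ^ (p - 1) :=
    Real.rpow_le_rpow (le_max_right _ _) (max_le_max_right 0 (by linarith)) h1.le
  rcases lt_or_ge 0 b with h | h
  · have : (max a 0) ^ (p - 1) < (max b 0) ^ (p - 1) :=
      Real.rpow_lt_rpow (le_max_right _ _) (by rw [max_eq_left h.le]; exact max_lt hab h) h1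
    linarith
  · have : (max (-b) 0) ^ (p - 1) < (max (-a) 0) ^ (p - 1) :=
      Real.rpow_lt_rpow (le_max_right _ _)
        (by rw [max_eq_left (by linarith : (0:ℝ) ≤ -a)]; exact max_lt (by linarith) (by linarith)) h1
    linarith

lemma phi_hom {p : ℝ} (hp : 1 < p) {s : ℝ} (hs : 0 ≤ s) (t r : ℝ) :
    phi p (s * t) * (s * r) = s ^ p * (phi p t * r) := by
  rcases hs.eq_or_lt with h | h
  · subst h; rw [Real.zero_rpow (by linarith)]; simp
  · unfold phi
    rw [abs_mul, abs_of_pos h, Real.mul_rpow hs (abs_nonneg _)]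
    have : s ^ p = s ^ (p - 2) * s * s := by
      rw [← Real.rpow_add_one h.ne', ← Real.rpow_add_one h.ne']; congr 1; ring
    rw [this]; ring

noncomputable def F (p : ℝ) (x : ℝ × ℝ) : ℝ := (phi p x.1 - phi p x.2) * (x.1 - x.2)
noncomputable def G (p : ℝ) (x : ℝ × ℝ) : ℝ := phi p (x.1 - x.2) * (x.1 - x.2)
noncomputable def H (p : ℝ) (x : ℝ × ℝ) : ℝ := |x.1| ^ p + |x.2| ^ p

lemma F_nonneg {p : ℝ} (hp : 1 < p) (x) : 0 ≤ F p x := by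
  unfold F
  rcases le_total x.1 x.2 with h | h
  · have := (phi_mono hp).monotone h
    exact mul_nonneg_of_nonpos_of_nonpos (by linarith) (by linarith)
  · have := (phi_mono hp).monotone h
    exact mul_nonneg (by linarith) (by linarith)

lemma G_nonneg {p : ℝ} (x) : 0 ≤ G p x := by
  unfold G phi
  rw [mul_assoc]
  exact mul_nonneg (Real.rpow_nonneg (abs_nonneg _) _) (mul_self_nonneg _)

lemma H_nonneg {p : ℝ} (x) : 0 ≤ H p x := by unfold H; positivity

lemma F_zero {p : ℝ} (hp : 1 < p) (x) (h : F p x = 0) : x.1 = x.2 := by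
  unfold F at h
  rcases mul_eq_zero.1 h with h | h
  · exact (phi_mono hp).injective (by linarith)
  · linarith

lemma G_zero {p : ℝ} (x) (h : G p x = 0) : x.1 = x.2 := by
  by_contra hne
  have h1 : x.1 - x.2 ≠ 0 := sub_ne_zero.2 hne
  have : 0 < |x.1 - x.2| ^ (p - 2) := Real.rpow_pos_of_pos (abs_pos.2 h1) _
  unfold G phi at h
  simp [h1, this.ne'] at h

lemma key {p : ℝ} (hp : 1 < p) (f g : ℝ × ℝ → ℝ) (hf : Continuous f) (hg : Continuous g)
    (hfh : ∀ s : ℝ, 0 ≤ s → ∀ x : ℝ × ℝ, f (s * x.1, s * x.2) = s ^ p * f x)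
    (hgh : ∀ s : ℝ, 0 ≤ s → ∀ x : ℝ × ℝ, g (s * x.1, s * x.2) = s ^ p * g x)
    (hg0 : ∀ x, 0 ≤ g x) (hz : ∀ x ∈ Metric.sphere (0 : ℝ × ℝ) 1, g x = 0 → f x ≤ 0)
    {δ : ℝ} (hδ : 0 < δ) :
    ∃ C : ℝ, 0 ≤ C ∧ ∀ x, f x ≤ δ * H p x + C * g x := by
  have hp0 : 0 < p := by linarith
  let K : Set (ℝ × ℝ) := Metric.sphere (0 : ℝ × ℝ) 1 ∩ {x | δ ≤ f x}
  have hK : IsCompact K := (isCompact_sphere _ _).inter_right (isClosed_le continuous_const hf)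
  have hS : ∃ C : ℝ, 0 ≤ C ∧ ∀ x ∈ Metric.sphere (0 : ℝ × ℝ) 1, f x ≤ δ + C * g x := by
    have hpos : ∀ x ∈ K, 0 < g x := by
      intro x hx
      refine lt_of_le_of_ne (hg0 x) fun h => ?_
      have h1 := hz x hx.1 h.symm
      have h2 : δ ≤ f x := hx.2
      linarith
    have hc : ContinuousOn (fun x => f x / g x) K :=
      hf.continuousOn.div hg.continuousOn fun x hx => (hpos x hx).ne'
    obtain ⟨C, hC⟩ := hK.bddAbove_image hc
    refine ⟨max C 0, le_max_right _ _, fun x hx => ?_⟩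
    have hgx := hg0 x
    have hm : 0 ≤ max C 0 := le_max_right _ _
    by_cases h : δ ≤ f x
    · have h1 : f x / g x ≤ C := hC ⟨x, ⟨hx, h⟩, rfl⟩
      have h3 := hpos x ⟨hx, h⟩
      have h2 : f x ≤ max C 0 * g x := (div_le_iff₀ h3).1 (h1.trans (le_max_left _ _))
      linarith
    · have := mul_nonneg hm hgx
      linarith
  obtain ⟨C, hC0, hC⟩ := hS
  refine ⟨C, hC0, fun x => ?_⟩
  by_cases hx : x = 0
  · have h1 := hfh 0 le_rfl 0
    have h2 := hgh 0 le_rfl 0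
    rw [Real.zero_rpow hp0.ne'] at h1 h2
    simp at h1 h2
    subst hx
    change f 0 = 0 at h1
    change g 0 = 0 at h2
    rw [h1, h2]
    have := mul_nonneg hδ.le (H_nonneg (p := p) 0)
    linarith
  · have hs : 0 < ‖x‖ := norm_pos_iff.2 hx
    let y : ℝ × ℝ := ‖x‖⁻¹ • x
    have hy : y ∈ Metric.sphere (0 : ℝ × ℝ) 1 := by
      simp [y, norm_smul, hs.ne']
    have hxy : (‖x‖ * y.1, ‖x‖ * y.2) = x := by
      ext <;> simp [y, hs.ne']
    have h1 := hfh ‖x‖ hs.le y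
    have h2 := hgh ‖x‖ hs.le y
    rw [hxy] at h1 h2
    have hH : ‖x‖ ^ p ≤ H p x := by
      unfold H
      have a1 : 0 ≤ |x.1| ^ p := by positivity
      have a2 : 0 ≤ |x.2| ^ p := by positivity
      rw [Prod.norm_def]
      rcases max_choice ‖x.1‖ ‖x.2‖ with h | h <;> rw [h, Real.norm_eq_abs] <;> linarith
    have h3 := mul_le_mul_of_nonneg_left (hC y hy) (Real.rpow_nonneg hs.le p)
    have h4 := mul_le_mul_of_nonneg_left hH hδ.le
    rw [h1, h2]
    linarith

lemma F_cont {p : ℝ} (hp : 1 < p) : Continuous (F p) := by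
  have := phi_cont hp
  unfold F; fun_prop
lemma G_cont {p : ℝ} (hp : 1 < p) : Continuous (G p) := by
  have := phi_cont hp
  unfold G; fun_prop
lemma H_cont {p : ℝ} (hp : 1 < p) : Continuous (H p) := by
  have h0 : 0 ≤ p := by linarith
  unfold H
  exact (continuous_fst.abs.rpow_const (fun _ => Or.inr h0)).add
    (continuous_snd.abs.rpow_const (fun _ => Or.inr h0))

lemma F_hom {p : ℝ} (hp : 1 < p) (s : ℝ) (hs : 0 ≤ s) (x : ℝ × ℝ) :
    F p (s * x.1, s * x.2) = s ^ p * F p x := by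
  unfold F
  simp only [← mul_sub, sub_mul, phi_hom hp hs]
lemma G_hom {p : ℝ} (hp : 1 < p) (s : ℝ) (hs : 0 ≤ s) (x : ℝ × ℝ) :
    G p (s * x.1, s * x.2) = s ^ p * G p x := by
  unfold G
  simp only [← mul_sub, phi_hom hp hs]

lemma F_le_G {p : ℝ} (hp : 1 < p) {δ : ℝ} (hδ : 0 < δ) :
    ∃ C : ℝ, 0 ≤ C ∧ ∀ x, F p x ≤ δ * H p x + C * G p x :=
  key hp _ _ (F_cont hp) (G_cont hp) (F_hom hp) (G_hom hp) G_nonneg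
    (fun x _ h => by simp [F, G_zero x h]) hδ
lemma G_le_F {p : ℝ} (hp : 1 < p) {δ : ℝ} (hδ : 0 < δ) :
    ∃ C : ℝ, 0 ≤ C ∧ ∀ x, G p x ≤ δ * H p x + C * F p x :=
  key hp _ _ (G_cont hp) (F_cont hp) (G_hom hp) (F_hom hp) (F_nonneg hp)
    (fun x _ h => by simp [G, F_zero hp x h]) hδ

lemma H_hom {p : ℝ} (s : ℝ) (hs : 0 ≤ s) (x : ℝ × ℝ) :
    H p (s * x.1, s * x.2) = s ^ p * H p x := by
  unfold H
  simp only [abs_mul, abs_of_nonneg hs, Real.mul_rpow hs (abs_nonneg _)]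
  ring

lemma le_H {p : ℝ} (hp : 1 < p) (f : ℝ × ℝ → ℝ) (hf : Continuous f)
    (hfh : ∀ s : ℝ, 0 ≤ s → ∀ x : ℝ × ℝ, f (s * x.1, s * x.2) = s ^ p * f x) :
    ∃ C : ℝ, ∀ x, |f x| ≤ C * H p x := by
  have hp0 : p ≠ 0 := by linarith
  obtain ⟨C, -, hC⟩ := key hp (fun x => |f x|) (H p) hf.abs (H_cont hp)
    (fun s hs x => by rw [hfh s hs, abs_mul, abs_of_nonneg (Real.rpow_nonneg hs p)])
    H_hom H_nonneg
    (fun x hx h => by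
      exfalso
      have a1 : 0 ≤ |x.1| ^ p := by positivity
      have a2 : 0 ≤ |x.2| ^ p := by positivity
      unfold H at h
      have b1 : |x.1| ^ p = 0 := by linarith
      have b2 : |x.2| ^ p = 0 := by linarith
      rw [Real.rpow_eq_zero (abs_nonneg _) hp0, abs_eq_zero] at b1 b2
      have : x = 0 := Prod.ext b1 b2
      simp [this] at hx) one_pos
  exact ⟨1 + C, fun x => (hC x).trans (by linarith)⟩

lemma tendsto_aux {A B : ℝ → ℝ} {M : ℝ} (hM : 0 ≤ M)
    (hB0 : ∀ ε ∈ Set.Ioo (0 : ℝ) 1, 0 ≤ B ε)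
    (h : ∀ δ : ℝ, 0 < δ → ∃ C : ℝ, 0 ≤ C ∧ ∀ ε ∈ Set.Ioo (0 : ℝ) 1, B ε ≤ δ * M + C * A ε)
    (hA : Tendsto A (𝓝[>] (0 : ℝ)) (𝓝 0)) : Tendsto B (𝓝[>] (0 : ℝ)) (𝓝 0) := by
  have hev : ∀ᶠ ε in 𝓝[>] (0 : ℝ), ε ∈ Set.Ioo (0 : ℝ) 1 := Ioo_mem_nhdsGT one_pos
  rw [tendsto_order]
  refine ⟨fun a ha => hev.mono fun ε hε => ha.trans_le (hB0 ε hε), fun a ha => ?_⟩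
  obtain ⟨C, hC0, hC⟩ := h (a / (2 * (M + 1))) (by positivity)
  have h1 : Tendsto (fun ε => C * A ε) (𝓝[>] (0 : ℝ)) (𝓝 0) := by
    simpa using hA.const_mul C
  filter_upwards [hev, h1.eventually_lt_const (half_pos ha)] with ε hε h2
  have h3 : a / (2 * (M + 1)) * M ≤ a / 2 := by
    rw [div_mul_eq_mul_div, div_le_div_iff₀ (by positivity) (by positivity)]
    nlinarith
  linarith [hC ε hε]

end NL

/-- Under the uniform energy bound
`sup_{ε∈(0,1)} (𝓔_{k_ε}(u_ε,u_ε) + 𝓔_{k_ε}(u,u)) < ∞`, one has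
`𝓔_{k_ε}(u_ε-u, u_ε-u) → 0` as `ε → 0⁺` iff
`𝓔_{k_ε}(u_ε, u_ε-u) - 𝓔_{k_ε}(u, u_ε-u) → 0` as `ε → 0⁺`. -/
theorem stmt_10 (d : ℕ) (hd : 1 ≤ d) (p : ℝ) (hp : 1 < p)
    (k : ℝ → EuclideanSpace ℝ (Fin d) → EuclideanSpace ℝ (Fin d) → ℝ)
    (hk : ∀ ε ∈ Set.Ioo (0 : ℝ) 1,
      Measurable fun z : EuclideanSpace ℝ (Fin d) × EuclideanSpace ℝ (Fin d) => k ε z.1 z.2)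
    (hk0 : ∀ ε ∈ Set.Ioo (0 : ℝ) 1, ∀ x y, 0 ≤ k ε x y)
    (uf : ℝ → EuclideanSpace ℝ (Fin d) → ℝ)
    (huf : ∀ ε ∈ Set.Ioo (0 : ℝ) 1, Measurable (uf ε))
    (u : EuclideanSpace ℝ (Fin d) → ℝ) (hu : Measurable u)
    (hbdd : ∃ C : ℝ≥0∞, C ≠ ⊤ ∧ ∀ ε ∈ Set.Ioo (0 : ℝ) 1,
      nlEnergy d p (k ε) (uf ε) + nlEnergy d p (k ε) u ≤ C) :
    Tendsto (fun ε => nlForm d p (k ε) (uf ε - u) (uf ε - u)) (𝓝[>] (0 : ℝ)) (𝓝 0) ↔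
    Tendsto (fun ε => nlForm d p (k ε) (uf ε) (uf ε - u) - nlForm d p (k ε) u (uf ε - u))
      (𝓝[>] (0 : ℝ)) (𝓝 0) := by
  obtain ⟨C, hCtop, hC⟩ := hbdd
  let E := EuclideanSpace ℝ (Fin d)
  let D : ℝ → E × E → ℝ × ℝ := fun ε z => (uf ε z.1 - uf ε z.2, u z.1 - u z.2)
  let κ : ℝ → E × E → ℝ := fun ε z => k ε z.1 z.2
  have hD : ∀ ε ∈ Set.Ioo (0 : ℝ) 1, Measurable (D ε) := fun ε hε => by
    have := huf ε hε
    exact Measurable.prodMk (by fun_prop) (by fun_prop)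
  have hmeas : ∀ ε ∈ Set.Ioo (0 : ℝ) 1, ∀ f : ℝ × ℝ → ℝ, Continuous f →
      Measurable fun z => f (D ε z) * κ ε z := fun ε hε f hf =>
    (hf.measurable.comp (hD ε hε)).mul (hk ε hε)
  have hκ : ∀ ε ∈ Set.Ioo (0 : ℝ) 1, ∀ z, 0 ≤ κ ε z := fun ε hε z => hk0 ε hε _ _
  have hHl : ∀ ε ∈ Set.Ioo (0 : ℝ) 1,
      ∫⁻ z, ENNReal.ofReal (NL.H p (D ε z) * κ ε z) ≤ C := fun ε hε => by
    refine le_trans (le_of_eq ?_) (hC ε hε)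
    unfold nlEnergy
    have hm1 : Measurable fun z : E × E =>
        ENNReal.ofReal (|u z.1 - u z.2| ^ p * k ε z.1 z.2) := by
      have := hk ε hε
      fun_prop
    rw [← lintegral_add_right _ hm1]
    refine lintegral_congr fun z => ?_
    have := hκ ε hε z
    rw [← ENNReal.ofReal_add (mul_nonneg (Real.rpow_nonneg (abs_nonneg _) _) this)
      (mul_nonneg (Real.rpow_nonneg (abs_nonneg _) _) this)]
    simp only [NL.H, D, κ, add_mul]
  have hHn : ∀ ε ∈ Set.Ioo (0 : ℝ) 1, ∀ z, 0 ≤ NL.H p (D ε z) * κ ε z := fun ε hε z =>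
    mul_nonneg (NL.H_nonneg _) (hκ ε hε z)
  have hHi : ∀ ε ∈ Set.Ioo (0 : ℝ) 1, Integrable fun z => NL.H p (D ε z) * κ ε z :=
    fun ε hε => by
      refine ⟨(hmeas ε hε _ (NL.H_cont hp)).aestronglyMeasurable, ?_⟩
      rw [hasFiniteIntegral_iff_ofReal (Eventually.of_forall (hHn ε hε))]
      exact (hHl ε hε).trans_lt hCtop.lt_top
  have hHM : ∀ ε ∈ Set.Ioo (0 : ℝ) 1, ∫ z, NL.H p (D ε z) * κ ε z ≤ C.toReal :=
    fun ε hε => by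
      rw [integral_eq_lintegral_of_nonneg_ae (Eventually.of_forall (hHn ε hε))
        (hHi ε hε).aestronglyMeasurable]
      exact ENNReal.toReal_mono hCtop (hHl ε hε)
  have hint : ∀ f : ℝ × ℝ → ℝ, Continuous f →
      (∀ s : ℝ, 0 ≤ s → ∀ x : ℝ × ℝ, f (s * x.1, s * x.2) = s ^ p * f x) →
      ∀ ε ∈ Set.Ioo (0 : ℝ) 1, Integrable fun z => f (D ε z) * κ ε z := by
    intro f hf hfh ε hε
    obtain ⟨c, hc⟩ := NL.le_H hp f hf hfh
    refine ((hHi ε hε).const_mul c).mono' (hmeas ε hε f hf).aestronglyMeasurable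
      (Eventually.of_forall fun z => ?_)
    rw [Real.norm_eq_abs, abs_mul, abs_of_nonneg (hκ ε hε z), ← mul_assoc]
    exact mul_le_mul_of_nonneg_right (hc _) (hκ ε hε z)
  have hFi := hint _ (NL.F_cont hp) (NL.F_hom hp)
  have hGi := hint _ (NL.G_cont hp) (NL.G_hom hp)
  have hphi := NL.phi_cont hp
  have hi1 := hint (fun x => NL.phi p x.1 * (x.1 - x.2)) (by fun_prop)
    (fun s hs x => by simp only [← mul_sub, NL.phi_hom hp hs])
  have hi2 := hint (fun x => NL.phi p x.2 * (x.1 - x.2)) (by fun_prop)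
    (fun s hs x => by simp only [← mul_sub, NL.phi_hom hp hs])
  have hev : ∀ᶠ ε in 𝓝[>] (0 : ℝ), ε ∈ Set.Ioo (0 : ℝ) 1 := Ioo_mem_nhdsGT one_pos
  have eG : ∀ ε, nlForm d p (k ε) (uf ε - u) (uf ε - u) = ∫ z, NL.G p (D ε z) * κ ε z := by
    intro ε
    unfold nlForm
    refine integral_congr_ae (Eventually.of_forall fun z => ?_)
    have : (uf ε - u) z.1 - (uf ε - u) z.2 = (uf ε z.1 - uf ε z.2) - (u z.1 - u z.2) := by
      simp only [Pi.sub_apply]; ring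
    simp only [this, NL.G, NL.phi, D, κ]
  have eF : ∀ ε ∈ Set.Ioo (0 : ℝ) 1,
      nlForm d p (k ε) (uf ε) (uf ε - u) - nlForm d p (k ε) u (uf ε - u)
        = ∫ z, NL.F p (D ε z) * κ ε z := by
    intro ε hε
    have e1 : nlForm d p (k ε) (uf ε) (uf ε - u)
        = ∫ z, NL.phi p (D ε z).1 * ((D ε z).1 - (D ε z).2) * κ ε z := by
      unfold nlForm
      refine integral_congr_ae (Eventually.of_forall fun z => ?_)
      simp only [NL.phi, D, κ, Pi.sub_apply]; ring
    have e2 : nlForm d p (k ε) u (uf ε - u)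
        = ∫ z, NL.phi p (D ε z).2 * ((D ε z).1 - (D ε z).2) * κ ε z := by
      unfold nlForm
      refine integral_congr_ae (Eventually.of_forall fun z => ?_)
      simp only [NL.phi, D, κ, Pi.sub_apply]; ring
    rw [e1, e2, ← integral_sub (hi1 ε hε) (hi2 ε hε)]
    refine integral_congr_ae (Eventually.of_forall fun z => ?_)
    simp only [NL.F]; ring
  have hcmp : ∀ f g : ℝ × ℝ → ℝ,
      (∀ ε ∈ Set.Ioo (0 : ℝ) 1, Integrable fun z => f (D ε z) * κ ε z) →
      (∀ ε ∈ Set.Ioo (0 : ℝ) 1, Integrable fun z => g (D ε z) * κ ε z) →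
      (∀ δ : ℝ, 0 < δ → ∃ c : ℝ, 0 ≤ c ∧ ∀ x, f x ≤ δ * NL.H p x + c * g x) →
      ∀ δ : ℝ, 0 < δ → ∃ c : ℝ, 0 ≤ c ∧ ∀ ε ∈ Set.Ioo (0 : ℝ) 1,
        ∫ z, f (D ε z) * κ ε z ≤ δ * C.toReal + c * ∫ z, g (D ε z) * κ ε z := by
    intro f g hf hg h δ hδ
    obtain ⟨c, hc0, hc⟩ := h δ hδ
    refine ⟨c, hc0, fun ε hε => ?_⟩
    have h1 : ∫ z, f (D ε z) * κ ε z
        ≤ ∫ z, (δ * (NL.H p (D ε z) * κ ε z) + c * (g (D ε z) * κ ε z)) := by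
      refine integral_mono (hf ε hε) (((hHi ε hε).const_mul δ).add ((hg ε hε).const_mul c))
        fun z => ?_
      have := mul_le_mul_of_nonneg_right (hc (D ε z)) (hκ ε hε z)
      simp only []
      linarith
    rw [integral_add ((hHi ε hε).const_mul δ) ((hg ε hε).const_mul c),
      integral_const_mul, integral_const_mul] at h1
    have := mul_le_mul_of_nonneg_left (hHM ε hε) hδ.le
    linarith
  rw [tendsto_congr eG, tendsto_congr' (hev.mono eF)]
  constructor
  · exact NL.tendsto_aux ENNReal.toReal_nonneg
      (fun ε hε => integral_nonneg fun z => mul_nonneg (NL.F_nonneg hp _) (hκ ε hε z))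
      (hcmp _ _ hFi hGi fun δ hδ => NL.F_le_G hp hδ)
  · exact NL.tendsto_aux ENNReal.toReal_nonneg
      (fun ε hε => integral_nonneg fun z => mul_nonneg (NL.G_nonneg _) (hκ ε hε z))
      (hcmp _ _ hGi hFi fun δ hδ => NL.G_le_F hp hδ)
end

section
/- Let $d \ge 1$ and $p \in (1,\infty)$. There exists a constant $c > 0$, depending only on $d$ and $p$, with the following property. Let $\rho : [0,\infty) \to [0,\infty)$ be measurable, set $\nu(h) = \rho(|h|)$ for $h \in \mathbb{R}^d$, and assume $A := \int_{\mathbb{R}^d}(1 \wedge |h|^p)\,\nu(h)\,dh < \infty$. Let $x \in \mathbb{R}^d$ and let $u : \mathbb{R}^d \to \mathbb{R}$ be bounded and measurable, twice continuously differentiable on the open ball $B(x,1)$, with $N := \sup_{y \in B(x,1)}\big(|u(y)| + |\nabla u(y)| + \|D^2 u(y)\|\big) < \infty$; if $1 < p < 2$ assume in addition $\nabla u(x) \ne 0$. Then for every $\delta \in (0,1]$ the function $y \mapsto |u(x)-u(y)|^{p-2}(u(x)-u(y))\,\nu(x-y)$ is integrable on $\{y : |y-x| \ge \delta\}$, the principal-value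 limit $L u(x) := \lim_{\delta \to 0^+} 2\int_{\{|y-x| \ge \delta\}} |u(x)-u(y)|^{p-2}(u(x)-u(y))\,\nu(x-y)\,dy$ exists in $\mathbb{R}$, and $|L u(x)| \le c\,\Big( N\, |\nabla u(x)|^{p-2} + N^{\max(1,\,p-1)} + \|u\|_{L^\infty(\mathbb{R}^d)}^{p-1} \Big)\, A$. -/
open MeasureTheory Filter
open scoped Topology

lemma psi_key {p : ℝ} (hp : 1 < p) (hp2 : p < 2) (τ : ℝ) :
    |(|τ| ^ (p - 2) * τ) - 1| ≤ 2 * |τ - 1| := by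
  have hpow : ∀ s : ℝ, 0 < s → s ^ (p - 2) * s = s ^ (p - 1) := by
    intro s hs
    rw [← Real.rpow_add_one hs.ne']; congr 1; ring
  have h1 : ∀ s : ℝ, 1 ≤ s → 1 ≤ s ^ (p - 1) ∧ s ^ (p - 1) ≤ s := by
    intro s hs
    refine ⟨Real.one_le_rpow hs (by linarith), ?_⟩
    calc s ^ (p - 1) ≤ s ^ (1 : ℝ) := Real.rpow_le_rpow_of_exponent_le hs (by linarith)
      _ = s := Real.rpow_one s
  have h2 : ∀ s : ℝ, 0 < s → s ≤ 1 → s ≤ s ^ (p - 1) ∧ s ^ (p - 1) ≤ 1 := by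
    intro s hs hs1
    refine ⟨?_, Real.rpow_le_one hs.le hs1 (by linarith)⟩
    calc s = s ^ (1 : ℝ) := (Real.rpow_one s).symm
      _ ≤ s ^ (p - 1) := Real.rpow_le_rpow_of_exponent_ge hs hs1 (by linarith)
  rcases lt_trichotomy τ 0 with h | h | h
  · rw [abs_of_neg h]
    have e : (-τ) ^ (p - 2) * τ = -((-τ) ^ (p - 1)) := by
      rw [← hpow (-τ) (by linarith)]; ring
    rw [e]
    have hs : 0 < -τ := by linarith
    have h0 : 0 ≤ (-τ) ^ (p - 1) := by positivity
    rw [abs_of_nonpos (by linarith), abs_of_neg (by linarith)]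
    rcases le_total 1 (-τ) with h' | h'
    · have := h1 _ h'; linarith
    · have := h2 _ hs h'; linarith
  · subst h; norm_num
  · rw [abs_of_pos h, hpow τ h]
    rcases le_total 1 τ with h' | h'
    · have := h1 _ h'
      rw [abs_of_nonneg (by linarith), abs_of_nonneg (by linarith)]; linarith
    · have := h2 _ h h'
      rw [abs_of_nonpos (by linarith), abs_of_nonpos (by linarith)]; linarith

lemma psi_small {p : ℝ} (hp : 1 < p) (hp2 : p < 2) (a b : ℝ) (ha : a ≠ 0) :
    |(|a + b| ^ (p - 2) * (a + b)) - |a| ^ (p - 2) * a| ≤ 2 * |b| * |a| ^ (p - 2) := by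
  have h := psi_key hp hp2 ((a + b) / a)
  have ha' : 0 < |a| := abs_pos.2 ha
  have e1 : (|a + b| ^ (p - 2) * (a + b)) - |a| ^ (p - 2) * a
      = (|a| ^ (p - 2) * a) * ((|(a + b) / a| ^ (p - 2) * ((a + b) / a)) - 1) := by
    rw [abs_div, Real.div_rpow (abs_nonneg _) (abs_nonneg _)]
    have : |a| ^ (p - 2) ≠ 0 := by positivity
    field_simp
  have e2 : (a + b) / a - 1 = b / a := by field_simp; ring
  rw [e2, abs_div b a] at h
  have hn : 0 ≤ |a| ^ (p - 2) := by positivity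
  rw [e1, abs_mul, abs_mul, abs_of_nonneg hn]
  calc |a| ^ (p - 2) * |a| * _ ≤ |a| ^ (p - 2) * |a| * (2 * (|b| / |a|)) := by gcongr
    _ = _ := by field_simp

lemma psi_pos {q : ℝ} (hq : 0 ≤ q) (x y : ℝ) (hy : 0 ≤ y) (hxy : y ≤ x) :
    |x ^ q * x - y ^ q * y| ≤ (q + 1) * |x - y| * (max x y) ^ q := by
  have hx : 0 ≤ x := hy.trans hxy
  rw [max_eq_left hxy]
  rcases hx.eq_or_lt with h | h
  · have : y = 0 := by linarith
    subst this; rw [← h]; simp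
  have hm : y ^ q * y ≤ x ^ q * x := by gcongr
  rw [abs_of_nonneg (by linarith), abs_of_nonneg (by linarith)]
  have hb := one_add_mul_self_le_rpow_one_add (s := y / x - 1) (p := q + 1)
    (by have : 0 ≤ y / x := by positivity
        linarith) (by linarith)
  have e : (1 + (y / x - 1)) ^ (q + 1) = (y ^ q * y) / (x ^ q * x) := by
    rw [show 1 + (y / x - 1) = y / x by ring, Real.div_rpow hy hx,
      Real.rpow_add_one' hy (by linarith), Real.rpow_add_one' hx (by linarith)]
  rw [e, le_div_iff₀ (by positivity)] at hb
  have : (1 + (q + 1) * (y / x - 1)) * (x ^ q * x) =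
    x ^ q * x - (q + 1) * (x - y) * x ^ q := by field_simp; ring
  linarith

lemma psi_pos' {q : ℝ} (hq : 0 ≤ q) (x y : ℝ) (hx : 0 ≤ x) (hy : 0 ≤ y) :
    |x ^ q * x - y ^ q * y| ≤ (q + 1) * |x - y| * (max x y) ^ q := by
  rcases le_total y x with h | h
  · exact psi_pos hq x y hy h
  · rw [abs_sub_comm, abs_sub_comm x, max_comm]; exact psi_pos hq y x hx h

lemma psi_opp {q : ℝ} (hq : 0 ≤ q) (x y : ℝ) (hx : 0 ≤ x) (hy : 0 ≤ y) :
    x ^ q * x + y ^ q * y ≤ (q + 1) * (x + y) * (max x y) ^ q := by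
  have h1 : x ^ q * x ≤ (max x y) ^ q * x := by gcongr; exact le_max_left _ _
  have h2 : y ^ q * y ≤ (max x y) ^ q * y := by gcongr; exact le_max_right _ _
  have h3 : 0 ≤ q * ((x + y) * (max x y) ^ q) := by positivity
  linarith

lemma psi_large {q : ℝ} (hq : 0 ≤ q) (a b : ℝ) :
    |(|a + b| ^ q * (a + b)) - |a| ^ q * a| ≤
      (q + 1) * 2 ^ q * (|b| * |a| ^ q + |b| * |b| ^ q) := by
  have h1 : |(|a + b| ^ q * (a + b)) - |a| ^ q * a| ≤
      (q + 1) * |b| * (max |a + b| |a|) ^ q := by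
    rcases le_total 0 (a + b) with ht | ht <;> rcases le_total 0 a with ha | ha
    · have := psi_pos' hq (a + b) a ht ha
      rw [abs_of_nonneg ht, abs_of_nonneg ha]
      simpa using this
    · have := psi_opp hq (a + b) (-a) ht (by linarith)
      rw [abs_of_nonneg ht, abs_of_nonpos ha]
      rw [abs_of_nonneg (a := b) (by linarith), abs_of_nonneg]
      · calc _ = (a + b) ^ q * (a + b) + (-a) ^ q * (-a) := by ring
          _ ≤ _ := this
          _ = _ := by ring
      · have h1 : 0 ≤ (a + b) ^ q * (a + b) := by positivity
        have h2 : 0 ≤ (-a) ^ q * (-a) :=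
          mul_nonneg (Real.rpow_nonneg (by linarith) _) (by linarith)
        linarith
    · have := psi_opp hq (-(a + b)) a (by linarith) ha
      rw [abs_of_nonpos ht, abs_of_nonneg ha]
      rw [abs_of_nonpos (a := b) (by linarith), abs_of_nonpos]
      · calc _ = (-(a + b)) ^ q * (-(a + b)) + a ^ q * a := by ring
          _ ≤ _ := this
          _ = _ := by ring
      · have h1 : 0 ≤ a ^ q * a := by positivity
        have h2 : 0 ≤ (-(a + b)) ^ q * (-(a + b)) :=
          mul_nonneg (Real.rpow_nonneg (by linarith) _) (by linarith)
        linarith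
    · have := psi_pos' hq (-(a + b)) (-a) (by linarith) (by linarith)
      rw [abs_of_nonpos ht, abs_of_nonpos ha, abs_sub_comm]
      calc _ = |(-(a + b)) ^ q * (-(a + b)) - (-a) ^ q * (-a)| := by congr 1; ring
        _ ≤ _ := this
        _ = _ := by rw [show -(a + b) - -a = -b by ring, abs_neg]
  have h2 : (max |a + b| |a|) ^ q ≤ 2 ^ q * (|a| ^ q + |b| ^ q) := by
    have hm : max |a + b| |a| ≤ 2 * max |a| |b| := by
      have := abs_add_le a b
      have := le_max_left |a| |b|
      have := le_max_right |a| |b|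
      have := abs_nonneg b
      have := abs_nonneg a
      apply max_le <;> linarith
    calc (max |a + b| |a|) ^ q ≤ (2 * max |a| |b|) ^ q := by gcongr
      _ = 2 ^ q * (max |a| |b|) ^ q := by
        rw [Real.mul_rpow (by norm_num) (by positivity)]
      _ ≤ _ := by
        gcongr
        have := Real.rpow_nonneg (abs_nonneg a) q
        have := Real.rpow_nonneg (abs_nonneg b) q
        rcases max_cases |a| |b| with h | h <;> rw [h.1] <;> linarith
  calc _ ≤ _ := h1
    _ ≤ (q + 1) * |b| * (2 ^ q * (|a| ^ q + |b| ^ q)) := by gcongr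
    _ = _ := by ring

lemma polar_aux {d : ℕ} (hd : 1 ≤ d) (φ : EuclideanSpace ℝ (Fin d) → ENNReal) (hφ : Measurable φ)
    (w : ℝ → ENNReal) (hw : Measurable w) :
    ∫⁻ h : EuclideanSpace ℝ (Fin d), φ (‖h‖⁻¹ • h) * w ‖h‖ =
      (∫⁻ ω, φ (ω : EuclideanSpace ℝ (Fin d))
        ∂(volume : Measure (EuclideanSpace ℝ (Fin d))).toSphere) *
      ∫⁻ r, w (r : ℝ) ∂(Measure.volumeIoiPow
        (Module.finrank ℝ (EuclideanSpace ℝ (Fin d)) - 1)) := by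
  have : Nonempty (Fin d) := ⟨⟨0, hd⟩⟩
  have : Nontrivial (EuclideanSpace ℝ (Fin d)) := inferInstance
  set μ : Measure (EuclideanSpace ℝ (Fin d)) := volume
  have hmp := μ.measurePreserving_homeomorphUnitSphereProd
  rw [← lintegral_prod_mul
    (f := fun ω : Metric.sphere (0 : EuclideanSpace ℝ (Fin d)) 1 => φ ω)
    (g := fun r : Set.Ioi (0 : ℝ) => w r) (hφ.comp measurable_subtype_coe).aemeasurable
    (hw.comp measurable_subtype_coe).aemeasurable,
    ← hmp.lintegral_comp_emb (Homeomorph.measurableEmbedding _)]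
  simp only [homeomorphUnitSphereProd_apply_snd_coe,
    homeomorphUnitSphereProd_apply_fst_coe]
  rw [lintegral_subtype_comap (measurableSet_singleton _).compl
    (fun h => φ (‖h‖⁻¹ • h) * w ‖h‖), restrict_compl_singleton]

lemma rpow_cube {q : ℝ} (hq : -1 < q) :
    Integrable (fun t : ℝ => (Set.Ioo (-1 : ℝ) 1).indicator (fun t => |t| ^ q) t) := by
  rw [integrable_indicator_iff measurableSet_Ioo]
  have h1 : IntegrableOn (fun t : ℝ => |t| ^ q) (Set.Ioo 0 1) := by
    refine ((intervalIntegral.integrableOn_Ioo_rpow_iff one_pos).2 hq).congr_fun ?_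
      measurableSet_Ioo
    intro t ht
    simp only [abs_of_pos ht.1]
  have h2 : IntegrableOn (fun t : ℝ => |t| ^ q) (Set.Ioo (-1) 0) := by
    have := h1.comp_neg
    simpa using this
  have h3 : IntegrableOn (fun t : ℝ => |t| ^ q) {0} := by simp
  refine ((h1.union h2).union h3).mono_set ?_
  intro t ht
  rcases lt_trichotomy t 0 with h | h | h
  · exact Or.inl (Or.inr ⟨ht.1, h⟩)
  · exact Or.inr h
  · exact Or.inl (Or.inl ⟨h, ht.2⟩)

lemma ball_fin {d : ℕ} (i0 : Fin d) {q : ℝ} (hq : -1 < q) (hq0 : q ≤ 0) :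
    ∫⁻ h : EuclideanSpace ℝ (Fin d), ENNReal.ofReal (|(‖h‖⁻¹ • h) i0| ^ q) *
      (Set.Iio (1 : ℝ)).indicator 1 ‖h‖ < ⊤ := by
  have hI := Integrable.fintype_prod (𝕜 := ℝ) (ι := Fin d) (E := ℝ) (μ := fun _ => volume)
    (f := fun i t => (Set.Ioo (-1 : ℝ) 1).indicator (fun t => if i = i0 then |t| ^ q else 1) t)
    (by
      intro i
      by_cases hi : i = i0
      · simpa [hi] using rpow_cube hq
      · simp only [hi, if_false]
        rw [integrable_indicator_iff measurableSet_Ioo]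
        simp)
  have hI2 := (PiLp.volume_preserving_ofLp (Fin d)).integrable_comp_of_integrable hI
  refine lt_of_le_of_lt (lintegral_mono fun h => ?_) hI2.lintegral_lt_top
  by_cases h1 : ‖h‖ < 1
  swap
  · simp [h1]
  have hc : ∀ i, h i ∈ Set.Ioo (-1 : ℝ) 1 := by
    intro i
    have := (PiLp.norm_apply_le h i).trans_lt h1
    rw [Real.norm_eq_abs, abs_lt] at this
    exact this
  simp only [Set.mem_Iio, h1, Set.indicator_of_mem, Pi.one_apply, mul_one, Function.comp_def, hc]
  apply ENNReal.ofReal_le_ofReal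
  rw [Finset.prod_ite_eq' Finset.univ i0 (fun i => |h i| ^ q)]
  simp only [Finset.mem_univ, if_true, PiLp.smul_apply, smul_eq_mul]
  by_cases h0 : h i0 = 0
  · simp [h0]
  have hn : 0 < ‖h‖ := norm_pos_iff.2 (by rintro rfl; simp at h0)
  apply Real.rpow_le_rpow_of_nonpos (abs_pos.2 h0) _ hq0
  rw [abs_mul, abs_inv, abs_norm]
  have : 1 ≤ ‖h‖⁻¹ := (one_le_inv₀ hn).2 h1.le
  nlinarith [abs_nonneg (h i0)]

lemma dir_std {d : ℕ} (i0 : Fin d) {q : ℝ} (hq : -1 < q) (hq0 : q ≤ 0) :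
    ∃ K : ENNReal, K ≠ ⊤ ∧ ∀ w : ℝ → ENNReal, Measurable w →
      ∫⁻ h : EuclideanSpace ℝ (Fin d), ENNReal.ofReal (|(‖h‖⁻¹ • h) i0| ^ q) * w ‖h‖ =
      K * ∫⁻ h : EuclideanSpace ℝ (Fin d), w ‖h‖ := by
  have hd : 1 ≤ d := Nat.one_le_iff_ne_zero.2 (fun h => by subst h; exact i0.elim0)
  have : Nonempty (Fin d) := ⟨⟨0, hd⟩⟩
  have : Nontrivial (EuclideanSpace ℝ (Fin d)) := inferInstance
  have hm : Measurable (fun h : EuclideanSpace ℝ (Fin d) => ENNReal.ofReal (|h i0| ^ q)) := by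
    fun_prop
  have P1 := polar_aux hd _ hm
  have P2 := fun w hw => polar_aux hd (fun _ => 1) measurable_const w hw
  simp only [one_mul, lintegral_const] at P2
  set μ : Measure (EuclideanSpace ℝ (Fin d)) := volume
  set J := ∫⁻ ω, ENNReal.ofReal (|(ω : EuclideanSpace ℝ (Fin d)) i0| ^ q) ∂μ.toSphere
  set σ := μ.toSphere Set.univ with hσ
  have hσ0 : σ ≠ 0 := by
    rw [hσ, Measure.measure_univ_ne_zero]; exact Measure.toSphere_ne_zero μ
  have hσt : σ ≠ ⊤ := measure_ne_top _ _
  have hJ : J ≠ ⊤ := by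
    intro hJ
    have hw1 : Measurable ((Set.Iio (1 : ℝ)).indicator (1 : ℝ → ENNReal)) :=
      measurable_one.indicator measurableSet_Iio
    have hb := ball_fin i0 hq hq0
    rw [P1 _ hw1, hJ] at hb
    have h0 : ∫⁻ r : Set.Ioi (0 : ℝ), (Set.Iio (1 : ℝ)).indicator (1 : ℝ → ENNReal) (r : ℝ)
      ∂(Measure.volumeIoiPow (Module.finrank ℝ (EuclideanSpace ℝ (Fin d)) - 1)) = 0 := by
      by_contra hne
      rw [ENNReal.top_mul hne] at hb
      exact lt_irrefl _ hb
    have := P2 _ hw1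
    rw [h0, mul_zero] at this
    have h3 : ∫⁻ h, (Metric.ball (0 : EuclideanSpace ℝ (Fin d)) 1).indicator 1 h ∂μ = 0 := by
      rw [← this]
      apply lintegral_congr
      intro h
      by_cases hh : ‖h‖ < 1
      · rw [Set.indicator_of_mem (by simpa using hh), Set.indicator_of_mem (by simpa using hh)]
        simp
      · rw [Set.indicator_of_notMem (by simpa using hh),
          Set.indicator_of_notMem (by simpa using hh)]
    rw [lintegral_indicator_one Metric.isOpen_ball.measurableSet] at h3
    exact (Metric.measure_ball_pos μ 0 one_pos).ne' h3
  refine ⟨J / σ, ENNReal.div_ne_top hJ hσ0, fun w hw => ?_⟩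
  rw [P1 w hw, P2 w hw, ← mul_assoc, ENNReal.div_mul_cancel hσ0 hσt]

lemma dir_real {d : ℕ} (hd : 1 ≤ d) {q : ℝ} (hq : -1 < q) (hq0 : q ≤ 0) :
    ∃ K : ℝ, 0 ≤ K ∧ ∀ e : EuclideanSpace ℝ (Fin d), ‖e‖ = 1 → ∀ w : ℝ → ℝ, Measurable w →
      (∀ t, 0 ≤ t → 0 ≤ w t) → Integrable (fun h : EuclideanSpace ℝ (Fin d) => w ‖h‖) →
      Integrable (fun h : EuclideanSpace ℝ (Fin d) => |inner ℝ e (‖h‖⁻¹ • h)| ^ q * w ‖h‖) ∧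
      ∫ h : EuclideanSpace ℝ (Fin d), |inner ℝ e (‖h‖⁻¹ • h)| ^ q * w ‖h‖ ≤
        K * ∫ h : EuclideanSpace ℝ (Fin d), w ‖h‖ := by
  let i0 : Fin d := ⟨0, hd⟩
  obtain ⟨K, hK, H⟩ := dir_std i0 hq hq0
  refine ⟨K.toReal, ENNReal.toReal_nonneg, fun e he w hw hw0 hwi => ?_⟩
  obtain ⟨b, hb⟩ := Orthonormal.exists_orthonormalBasis_extension_of_card_eq (𝕜 := ℝ)
    (E := EuclideanSpace ℝ (Fin d)) (ι := Fin d) (by simp) (v := fun _ => e) (s := {i0})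
    (by
      rw [orthonormal_iff_ite]
      rintro ⟨i, rfl⟩ ⟨j, rfl⟩
      simp [he])
  have hb0 : b i0 = e := hb i0 rfl
  have hin : ∀ h, inner ℝ e h = (b.repr h) i0 := by
    intro h; rw [b.repr_apply_apply, hb0]
  have key : ∫⁻ h : EuclideanSpace ℝ (Fin d),
      ENNReal.ofReal (|inner ℝ e (‖h‖⁻¹ • h)| ^ q * w ‖h‖) =
      K * ∫⁻ h : EuclideanSpace ℝ (Fin d), ENNReal.ofReal (w ‖h‖) := by
    have hc := b.measurePreserving_repr.lintegral_comp_emb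
      b.repr.toHomeomorph.measurableEmbedding (fun h : EuclideanSpace ℝ (Fin d) =>
        ENNReal.ofReal (|(‖h‖⁻¹ • h) i0| ^ q) * ENNReal.ofReal (w ‖h‖))
    rw [← H (fun t => ENNReal.ofReal (w t)) (by fun_prop), ← hc]
    apply lintegral_congr
    intro h
    rw [hin, ENNReal.ofReal_mul (by positivity), b.repr.norm_map, map_smul]
  have hmeas : Measurable (fun h : EuclideanSpace ℝ (Fin d) =>
      |inner ℝ e (‖h‖⁻¹ • h)| ^ q * w ‖h‖) := by fun_prop
  have hnn : ∀ h : EuclideanSpace ℝ (Fin d), 0 ≤ |inner ℝ e (‖h‖⁻¹ • h)| ^ q * w ‖h‖ :=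
    fun h => mul_nonneg (by positivity) (hw0 _ (norm_nonneg _))
  have hwl : ∫⁻ h : EuclideanSpace ℝ (Fin d), ENNReal.ofReal (w ‖h‖) ≠ ⊤ :=
    hwi.lintegral_lt_top.ne
  constructor
  · refine ⟨hmeas.aestronglyMeasurable, ?_⟩
    rw [hasFiniteIntegral_iff_ofReal (Eventually.of_forall hnn), key]
    exact ENNReal.mul_lt_top hK.lt_top hwl.lt_top
  · rw [integral_eq_lintegral_of_nonneg_ae (Eventually.of_forall hnn) hmeas.aestronglyMeasurable,
      key, ENNReal.toReal_mul, integral_eq_lintegral_of_nonneg_ae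
        (Eventually.of_forall fun h => hw0 _ (norm_nonneg _)) hwi.aestronglyMeasurable]

lemma rho_int {d : ℕ} {p : ℝ} (hp : 1 < p) (ρ : ℝ → ℝ) (hρ : Measurable ρ) (hρ0 : ∀ t, 0 ≤ ρ t)
    (hA : Integrable (fun h : EuclideanSpace ℝ (Fin d) => min 1 (‖h‖ ^ p) * ρ ‖h‖))
    {δ : ℝ} (hδ : 0 < δ) :
    IntegrableOn (fun h : EuclideanSpace ℝ (Fin d) => ρ ‖h‖) {h | δ ≤ ‖h‖} := by
  have hS : MeasurableSet {h : EuclideanSpace ℝ (Fin d) | δ ≤ ‖h‖} :=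
    measurableSet_le measurable_const measurable_norm
  have hm : 0 < min 1 (δ ^ p) := lt_min one_pos (by positivity)
  refine Integrable.mono' ((hA.const_mul (min 1 (δ ^ p))⁻¹).integrableOn)
    (hρ.comp measurable_norm).aestronglyMeasurable ?_
  refine (ae_restrict_iff' hS).2 (Eventually.of_forall fun h hh => ?_)
  rw [Real.norm_of_nonneg (hρ0 _), ← mul_assoc]
  refine le_mul_of_one_le_left (hρ0 _) ?_
  rw [inv_mul_eq_div, one_le_div hm]
  have : δ ^ p ≤ ‖h‖ ^ p := Real.rpow_le_rpow hδ.le hh (by linarith)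
  exact min_le_min le_rfl this

lemma pv_abstract {d : ℕ} {p : ℝ} (hp : 1 < p)
    (ρ : ℝ → ℝ) (hρ : Measurable ρ) (hρ0 : ∀ t, 0 ≤ ρ t)
    (hA : Integrable (fun h : EuclideanSpace ℝ (Fin d) => min 1 (‖h‖ ^ p) * ρ ‖h‖))
    (f k D : EuclideanSpace ℝ (Fin d) → ℝ) (hf : Measurable f) (hk : Measurable k)
    (hf0 : f 0 = 0) (hodd : ∀ h, k (-h) = - k h) {B B' : ℝ} (hB : ∀ h, |f h| ≤ B)
    (hB' : ∀ h, ‖h‖ < 1 → |k h| ≤ B') (hD : Integrable D) (hD0 : ∀ h, 0 ≤ D h)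
    (hfk : ∀ᵐ h, ‖h‖ < 1 → |f h - k h| * ρ ‖h‖ ≤ D h) :
    (∀ δ : ℝ, 0 < δ → IntegrableOn (fun h => f h * ρ ‖h‖) {h | δ ≤ ‖h‖}) ∧
    ∃ L : ℝ, Tendsto (fun δ : ℝ => 2 * ∫ h in {h | δ ≤ ‖h‖}, f h * ρ ‖h‖) (𝓝[>] (0 : ℝ)) (𝓝 L) ∧
      |L| ≤ 2 * (∫ h, D h + B * (min 1 (‖h‖ ^ p) * ρ ‖h‖)) := by
  have hB0 : 0 ≤ B := (abs_nonneg _).trans (hB 0)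
  have hS : ∀ δ : ℝ, MeasurableSet {h : EuclideanSpace ℝ (Fin d) | δ ≤ ‖h‖} := fun δ =>
    measurableSet_le measurable_const measurable_norm
  have hball : MeasurableSet {h : EuclideanSpace ℝ (Fin d) | ‖h‖ < 1} :=
    measurableSet_lt measurable_norm measurable_const
  set k1 : EuclideanSpace ℝ (Fin d) → ℝ := {h | ‖h‖ < 1}.indicator k with hk1
  have hk1m : Measurable k1 := hk.indicator hball
  have hk1odd : ∀ h, k1 (-h) = - k1 h := by
    intro h
    simp only [hk1, Set.indicator_apply, Set.mem_ofPred_eq, norm_neg, hodd]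
    split_ifs <;> simp
  have hk1b : ∀ h, |k1 h| ≤ |B'| := by
    intro h
    simp only [hk1, Set.indicator_apply, Set.mem_ofPred_eq]
    split_ifs with hh
    · exact (hB' h hh).trans (le_abs_self _)
    · simp
  have hk10 : k1 0 = 0 := by
    have := hk1odd 0
    rw [neg_zero] at this; linarith
  have I1 : ∀ δ : ℝ, 0 < δ → IntegrableOn (fun h => f h * ρ ‖h‖) {h | δ ≤ ‖h‖} := fun δ hδ =>
    (rho_int hp ρ hρ hρ0 hA hδ).bdd_mul hf.aestronglyMeasurable (Eventually.of_forall hB)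
  have I2 : ∀ δ : ℝ, 0 < δ → IntegrableOn (fun h => k1 h * ρ ‖h‖) {h | δ ≤ ‖h‖} := fun δ hδ =>
    (rho_int hp ρ hρ hρ0 hA hδ).bdd_mul hk1m.aestronglyMeasurable (Eventually.of_forall hk1b)
  have Z : ∀ δ : ℝ, ∫ h in {h | δ ≤ ‖h‖}, k1 h * ρ ‖h‖ = 0 := by
    intro δ
    rw [← integral_indicator (hS δ)]
    have h1 := integral_neg_eq_self
      ({h : EuclideanSpace ℝ (Fin d) | δ ≤ ‖h‖}.indicator fun h => k1 h * ρ ‖h‖) volume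
    have h2 : (fun h => ({h : EuclideanSpace ℝ (Fin d) | δ ≤ ‖h‖}.indicator
        fun h => k1 h * ρ ‖h‖) (-h)) =
        fun h => - ({h : EuclideanSpace ℝ (Fin d) | δ ≤ ‖h‖}.indicator
        fun h => k1 h * ρ ‖h‖) h := by
      funext h
      simp only [Set.indicator_apply, Set.mem_ofPred_eq, norm_neg, hk1odd]
      split_ifs <;> simp
    rw [h2, integral_neg] at h1
    linarith
  set W : EuclideanSpace ℝ (Fin d) → ℝ := fun h => (f h - k1 h) * ρ ‖h‖ with hW
  set G : EuclideanSpace ℝ (Fin d) → ℝ := fun h => D h + B * (min 1 (‖h‖ ^ p) * ρ ‖h‖) with hG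
  have hGi : Integrable G := hD.add (hA.const_mul B)
  have hWm : Measurable W := by fun_prop
  have hWG : ∀ᵐ h, ‖W h‖ ≤ G h := by
    filter_upwards [hfk] with h hh
    simp only [hW, hG, hk1, Set.indicator_apply, Set.mem_ofPred_eq, Real.norm_eq_abs, abs_mul,
      abs_of_nonneg (hρ0 _)]
    have hmin : 0 ≤ min 1 (‖h‖ ^ p) := le_min zero_le_one (by positivity)
    split_ifs with h1
    · have := hh h1
      have : 0 ≤ B * (min 1 (‖h‖ ^ p) * ρ ‖h‖) := mul_nonneg hB0 (mul_nonneg hmin (hρ0 _))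
      linarith
    · have h2 : 1 ≤ ‖h‖ ^ p := Real.one_le_rpow (not_lt.1 h1) (by linarith)
      rw [min_eq_left h2, one_mul, sub_zero]
      have := mul_le_mul_of_nonneg_right (hB h) (hρ0 ‖h‖)
      have := hD0 h
      linarith
  refine ⟨I1, 2 * ∫ h, W h, ?_, ?_⟩
  · apply Tendsto.const_mul
    have E : ∀ᶠ δ : ℝ in 𝓝[>] (0 : ℝ),
        ∫ h, ({h : EuclideanSpace ℝ (Fin d) | δ ≤ ‖h‖}.indicator W) h =
        ∫ h in {h : EuclideanSpace ℝ (Fin d) | δ ≤ ‖h‖}, f h * ρ ‖h‖ := by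
      filter_upwards [self_mem_nhdsWithin] with δ hδ
      rw [integral_indicator (hS δ)]
      simp only [hW, sub_mul]
      rw [integral_sub (I1 δ hδ) (I2 δ hδ), Z, sub_zero]
    refine Tendsto.congr' E ?_
    refine tendsto_integral_filter_of_dominated_convergence G ?_ ?_ hGi ?_
    · exact Eventually.of_forall fun δ => (hWm.indicator (hS δ)).aestronglyMeasurable
    · refine Eventually.of_forall fun δ => ?_
      filter_upwards [hWG] with h hh
      exact (norm_indicator_le_norm_self _ _).trans hh
    · refine Eventually.of_forall fun h => ?_
      by_cases h0 : h = 0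
      · have : W h = 0 := by simp [hW, h0, hf0, hk10]
        simp [Set.indicator_apply, this]
      · refine tendsto_const_nhds.congr' ?_
        have hn : 0 < ‖h‖ := norm_pos_iff.2 h0
        have : ∀ᶠ δ : ℝ in 𝓝[>] (0 : ℝ), δ < ‖h‖ :=
          nhdsWithin_le_nhds (Iio_mem_nhds hn)
        filter_upwards [this] with δ hδ
        rw [Set.indicator_of_mem (show h ∈ {h | δ ≤ ‖h‖} from hδ.le)]
  · rw [abs_mul, abs_two]
    gcongr
    exact norm_integral_le_of_norm_le hGi hWG

lemma taylor_aux {E : Type*} [NormedAddCommGroup E] [NormedSpace ℝ E] (u : E → ℝ) (x : E) (N : ℝ)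
    (hu : ContDiffOn ℝ 2 u (Metric.ball x 1))
    (hN : ∀ y ∈ Metric.ball x 1, |u y| + ‖fderiv ℝ u y‖ + ‖fderiv ℝ (fderiv ℝ u) y‖ ≤ N)
    (h : E) (hh : ‖h‖ < 1) : |u (x + h) - u x - fderiv ℝ u x h| ≤ N * ‖h‖ ^ 2 := by
  have hN0 : 0 ≤ N := le_trans (by positivity) (hN x (Metric.mem_ball_self one_pos))
  have hd1 : ∀ y ∈ Metric.ball x 1, DifferentiableAt ℝ u y := fun y hy =>
    (hu.contDiffAt (Metric.isOpen_ball.mem_nhds hy)).differentiableAt (by norm_num)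
  have hd2 : ∀ y ∈ Metric.ball x 1, DifferentiableAt ℝ (fderiv ℝ u) y := fun y hy =>
    ((hu.contDiffAt (Metric.isOpen_ball.mem_nhds hy)).fderiv_right
      (m := 1) (by norm_num)).differentiableAt (by norm_num)
  have hx : x ∈ Metric.ball x 1 := Metric.mem_ball_self one_pos
  have hL : ∀ y ∈ Metric.ball x 1, ‖fderiv ℝ u y - fderiv ℝ u x‖ ≤ N * ‖y - x‖ := fun y hy =>
    Convex.norm_image_sub_le_of_norm_fderiv_le hd2 (fun z hz => by
      have := hN z hz
      have := abs_nonneg (u z)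
      have := norm_nonneg (fderiv ℝ u z)
      linarith) (convex_ball x 1) hx hy
  have hsub : Metric.closedBall x ‖h‖ ⊆ Metric.ball x 1 := Metric.closedBall_subset_ball hh
  have := Convex.norm_image_sub_le_of_norm_fderiv_le' (𝕜 := ℝ) (f := u) (C := N * ‖h‖)
    (s := Metric.closedBall x ‖h‖) (x := x) (y := x + h) (φ := fderiv ℝ u x)
    (fun y hy => hd1 y (hsub hy)) (fun y hy => (hL y (hsub hy)).trans (by
      gcongr; simpa [dist_eq_norm] using hy)) (convex_closedBall _ _)
    (Metric.mem_closedBall_self (norm_nonneg _)) (by simp)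
  rw [add_sub_cancel_left, Real.norm_eq_abs] at this
  linarith [this, sq ‖h‖, mul_assoc N ‖h‖ ‖h‖]

lemma abs_psi {p : ℝ} (hp : 1 < p) (t : ℝ) : |(|t| ^ (p - 2) * t)| = |t| ^ (p - 1) := by
  rw [abs_mul, abs_of_nonneg (Real.rpow_nonneg (abs_nonneg t) _),
    ← Real.rpow_add_one' (abs_nonneg t) (by linarith)]
  congr 1; ring

lemma main_of_D {d : ℕ} {p : ℝ} (hp : 1 < p) {C : ℝ} (hC : 0 ≤ C)
    (ρ : ℝ → ℝ) (hρ : Measurable ρ) (hρ0 : ∀ t, 0 ≤ ρ t)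
    (hA : Integrable (fun h : EuclideanSpace ℝ (Fin d) => min 1 (‖h‖ ^ p) * ρ ‖h‖))
    (x : EuclideanSpace ℝ (Fin d)) (u : EuclideanSpace ℝ (Fin d) → ℝ) (hu : Measurable u)
    (M : ℝ) (hM : ∀ y, |u y| ≤ M) (N : ℝ) (hN : 0 ≤ N) (g : EuclideanSpace ℝ (Fin d))
    (D : EuclideanSpace ℝ (Fin d) → ℝ) (hD : Integrable D) (hD0 : ∀ h, 0 ≤ D h)
    (hDC : ∫ h, D h ≤ C * (N * ‖g‖ ^ (p - 2) + N ^ max 1 (p - 1)) *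
      ∫ h : EuclideanSpace ℝ (Fin d), min 1 (‖h‖ ^ p) * ρ ‖h‖)
    (hfk : ∀ᵐ h, ‖h‖ < 1 → |(|u x - u (x + h)| ^ (p - 2) * (u x - u (x + h))) -
      |-inner ℝ g h| ^ (p - 2) * (-inner ℝ g h)| * ρ ‖h‖ ≤ D h) :
    (∀ δ : ℝ, 0 < δ → δ ≤ 1 →
          IntegrableOn
            (fun y => |u x - u y| ^ (p - 2) * (u x - u y) * ρ ‖x - y‖)
            {y : EuclideanSpace ℝ (Fin d) | δ ≤ ‖y - x‖}) ∧
        ∃ L : ℝ,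
          Tendsto (fun δ : ℝ =>
              2 * ∫ y in {y : EuclideanSpace ℝ (Fin d) | δ ≤ ‖y - x‖},
                |u x - u y| ^ (p - 2) * (u x - u y) * ρ ‖x - y‖)
            (𝓝[>] (0 : ℝ)) (𝓝 L) ∧
          |L| ≤
            (2 * C + 2 * 2 ^ (p - 1)) * (N * ‖g‖ ^ (p - 2) + N ^ max 1 (p - 1) + M ^ (p - 1)) *
              ∫ h : EuclideanSpace ℝ (Fin d), min 1 (‖h‖ ^ p) * ρ ‖h‖ := by
  have hM0 : 0 ≤ M := (abs_nonneg _).trans (hM x)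
  have hB : ∀ h, |(|u x - u (x + h)| ^ (p - 2) * (u x - u (x + h)))| ≤ (2 * M) ^ (p - 1) := by
    intro h
    rw [abs_psi hp]
    refine Real.rpow_le_rpow (abs_nonneg _) ?_ (by linarith)
    have := abs_sub (u x) (u (x + h))
    have := hM x
    have := hM (x + h)
    linarith
  have hB' : ∀ h : EuclideanSpace ℝ (Fin d), ‖h‖ < 1 →
      |(|-inner ℝ g h| ^ (p - 2) * (-inner ℝ g h))| ≤ ‖g‖ ^ (p - 1) := by
    intro h hh
    rw [abs_psi hp, abs_neg]
    refine Real.rpow_le_rpow (abs_nonneg _) ?_ (by linarith)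
    refine (abs_real_inner_le_norm g h).trans ?_
    exact mul_le_of_le_one_right (norm_nonneg _) hh.le
  obtain ⟨I, L, hL, hLb⟩ := pv_abstract hp ρ hρ hρ0 hA
    (fun h => |u x - u (x + h)| ^ (p - 2) * (u x - u (x + h)))
    (fun h => |-inner ℝ g h| ^ (p - 2) * (-inner ℝ g h)) D (by fun_prop) (by fun_prop)
    (by simp) (fun h => by simp) hB hB' hD hD0 hfk
  have hmp : MeasurePreserving (fun h : EuclideanSpace ℝ (Fin d) => x + h) volume volume :=
    measurePreserving_add_left volume x
  have hemb : MeasurableEmbedding (fun h : EuclideanSpace ℝ (Fin d) => x + h) :=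
    measurableEmbedding_addLeft x
  have hpre : ∀ δ : ℝ, (fun h : EuclideanSpace ℝ (Fin d) => x + h) ⁻¹' {y | δ ≤ ‖y - x‖} =
      {h | δ ≤ ‖h‖} := by
    intro δ; ext h; simp
  refine ⟨fun δ hδ _ => ?_, L, ?_, ?_⟩
  · rw [← hmp.integrableOn_comp_preimage hemb, hpre]
    refine (I δ hδ).congr (Eventually.of_forall fun h => ?_)
    simp
  · refine hL.congr fun δ => ?_
    have hc := hmp.setIntegral_preimage_emb hemb
      (fun y => |u x - u y| ^ (p - 2) * (u x - u y) * ρ ‖x - y‖) {y | δ ≤ ‖y - x‖}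
    rw [← hc, hpre]
    simp
  · rw [integral_add hD (hA.const_mul _), integral_const_mul] at hLb
    set A := ∫ h : EuclideanSpace ℝ (Fin d), min 1 (‖h‖ ^ p) * ρ ‖h‖
    have hA0 : 0 ≤ A := integral_nonneg fun h =>
      mul_nonneg (le_min zero_le_one (by positivity)) (hρ0 _)
    rw [Real.mul_rpow (by norm_num) hM0] at hLb
    have h1 : 0 ≤ N * ‖g‖ ^ (p - 2) + N ^ max 1 (p - 1) := by positivity
    have h2 : 0 ≤ M ^ (p - 1) := by positivity
    have h3 : (0 : ℝ) ≤ 2 ^ (p - 1) := by positivity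
    set S := N * ‖g‖ ^ (p - 2) + N ^ max 1 (p - 1)
    have h4 : 0 ≤ C * M ^ (p - 1) * A := by positivity
    have h5 : 0 ≤ 2 ^ (p - 1) * S * A := by positivity
    linarith

lemma inner_ne_ae {d : ℕ} (g : EuclideanSpace ℝ (Fin d)) (hg : g ≠ 0) :
    ∀ᵐ h : EuclideanSpace ℝ (Fin d), inner ℝ g h ≠ 0 := by
  have := Measure.addHaar_submodule (volume : Measure (EuclideanSpace ℝ (Fin d)))
    (LinearMap.ker (innerSL ℝ g).toLinearMap) (by
      intro h
      have : g ∈ LinearMap.ker (innerSL ℝ g).toLinearMap := by rw [h]; trivial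
      simp at this
      exact hg this)
  rw [ae_iff]
  convert this using 2
  ext h
  simp

lemma diff_identity {d : ℕ} (x : EuclideanSpace ℝ (Fin d)) (u : EuclideanSpace ℝ (Fin d) → ℝ)
    (h : EuclideanSpace ℝ (Fin d)) :
    u x - u (x + h) = -inner ℝ (gradient u x) h + -(u (x + h) - u x - fderiv ℝ u x h) := by
  have : fderiv ℝ u x h = inner ℝ (gradient u x) h := by
    rw [← toDual_gradient, InnerProductSpace.toDual_apply_apply]
  rw [this]; ring

lemma real_aux {K A S N G T : ℝ} (hK : 0 ≤ K) (hA : 0 ≤ A) (hS : 0 ≤ S) (hc : 0 ≤ 2 * N * G)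
    (hT : T ≤ K * A) : 2 * N * G * T ≤ 2 * K * (N * G + S) * A := by
  have h1 : 0 ≤ 2 * K * S * A := by positivity
  have h2 := mul_le_mul_of_nonneg_left hT hc
  linarith

set_option maxHeartbeats 1000000 in
theorem stmt_16 (d : ℕ) (hd : 1 ≤ d) (p : ℝ) (hp : 1 < p) :
    ∃ c : ℝ, 0 < c ∧
      ∀ ρ : ℝ → ℝ, Measurable ρ → (∀ t, 0 ≤ ρ t) →
      Integrable (fun h : EuclideanSpace ℝ (Fin d) => min 1 (‖h‖ ^ p) * ρ ‖h‖) →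
      ∀ (x : EuclideanSpace ℝ (Fin d)) (u : EuclideanSpace ℝ (Fin d) → ℝ),
        Measurable u →
        ContDiffOn ℝ 2 u (Metric.ball x 1) →
        ∀ M : ℝ, (∀ y, |u y| ≤ M) →
        ∀ N : ℝ, (∀ y ∈ Metric.ball x 1,
          |u y| + ‖fderiv ℝ u y‖ + ‖fderiv ℝ (fderiv ℝ u) y‖ ≤ N) →
        (p < 2 → gradient u x ≠ 0) →
        (∀ δ : ℝ, 0 < δ → δ ≤ 1 →
          IntegrableOn
            (fun y => |u x - u y| ^ (p - 2) * (u x - u y) * ρ ‖x - y‖)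
            {y : EuclideanSpace ℝ (Fin d) | δ ≤ ‖y - x‖}) ∧
        ∃ L : ℝ,
          Tendsto (fun δ : ℝ =>
              2 * ∫ y in {y : EuclideanSpace ℝ (Fin d) | δ ≤ ‖y - x‖},
                |u x - u y| ^ (p - 2) * (u x - u y) * ρ ‖x - y‖)
            (𝓝[>] (0 : ℝ)) (𝓝 L) ∧
          |L| ≤
            c * (N * ‖gradient u x‖ ^ (p - 2) + N ^ max 1 (p - 1) + M ^ (p - 1)) *
              ∫ h : EuclideanSpace ℝ (Fin d), min 1 (‖h‖ ^ p) * ρ ‖h‖ := by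
  have hmul : ∀ (t s : ℝ), 0 ≤ t → t ^ 2 * (t ^ (p - 2) * s) = t ^ p * s := by
    intro t s ht
    rcases ht.eq_or_lt with h | h
    · rw [← h, Real.zero_rpow (by linarith : p ≠ 0)]; simp
    · rw [← mul_assoc, ← Real.rpow_natCast, ← Real.rpow_add h]; congr 2; norm_num
  have hmin : ∀ t : ℝ, 0 ≤ t → t < 1 → min 1 (t ^ p) = t ^ p := fun t h0 h1 =>
    min_eq_right (Real.rpow_le_one h0 h1.le (by linarith))
  rcases lt_or_ge p 2 with hp2 | hp2
  · obtain ⟨K, hK, H⟩ := dir_real hd (q := p - 2) (by linarith) (by linarith)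
    refine ⟨2 * (2 * K) + 2 * 2 ^ (p - 1), by positivity, ?_⟩
    intro ρ hρ hρ0 hA x u hu hu2 M hM N hN hg
    have hg := hg hp2
    have hN0 : 0 ≤ N := le_trans (by positivity) (hN x (Metric.mem_ball_self one_pos))
    set g := gradient u x with hgdef
    have hgn : 0 < ‖g‖ := norm_pos_iff.2 hg
    obtain ⟨T, Tb⟩ := H (‖g‖⁻¹ • g) (by rw [norm_smul, norm_inv, norm_norm]; field_simp)
      (fun t => min 1 (t ^ p) * ρ t) (by fun_prop)
      (fun t ht => mul_nonneg (le_min zero_le_one (Real.rpow_nonneg ht _)) (hρ0 _)) hA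
    refine main_of_D hp (by positivity) ρ hρ hρ0 hA x u hu M hM N hN0 g
      (fun h => (2 * N * ‖g‖ ^ (p - 2)) * (|inner ℝ (‖g‖⁻¹ • g) (‖h‖⁻¹ • h)| ^ (p - 2) *
        (min 1 (‖h‖ ^ p) * ρ ‖h‖))) (T.const_mul _) ?_ ?_ ?_
    · intro h
      exact mul_nonneg (by positivity) (mul_nonneg (by positivity)
        (mul_nonneg (le_min zero_le_one (by positivity)) (hρ0 _)))
    · rw [integral_const_mul]
      have hA0 : 0 ≤ ∫ h : EuclideanSpace ℝ (Fin d), min 1 (‖h‖ ^ p) * ρ ‖h‖ :=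
        integral_nonneg fun h => mul_nonneg (le_min zero_le_one (by positivity)) (hρ0 _)
      beta_reduce at Tb
      have hc : 0 ≤ 2 * N * ‖g‖ ^ (p - 2) := by positivity
      have hS : 0 ≤ N ^ max 1 (p - 1) := Real.rpow_nonneg hN0 _
      exact real_aux hK hA0 hS hc Tb
    · filter_upwards [inner_ne_ae g hg] with h hh h1
      have hh0 : 0 < ‖h‖ := norm_pos_iff.2 (by rintro rfl; simp at hh)
      rw [diff_identity x u h, ← hgdef]
      have ht := taylor_aux u x N hu2 hN h h1
      have hs := psi_small hp hp2 (-inner ℝ g h) (-(u (x + h) - u x - fderiv ℝ u x h))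
        (neg_ne_zero.2 hh)
      rw [abs_neg (u (x + h) - u x - fderiv ℝ u x h), abs_neg (inner ℝ g h)] at hs
      have e : |inner ℝ g h| ^ (p - 2) = ‖g‖ ^ (p - 2) * (‖h‖ ^ (p - 2) *
          |inner ℝ (‖g‖⁻¹ • g) (‖h‖⁻¹ • h)| ^ (p - 2)) := by
        rw [← Real.mul_rpow (by positivity) (by positivity),
          ← Real.mul_rpow (by positivity) (by positivity), real_inner_smul_left,
          real_inner_smul_right, abs_mul, abs_mul, abs_inv, abs_inv, abs_norm, abs_norm]
        congr 1; field_simp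
      rw [hmin _ hh0.le h1]
      rw [abs_neg (inner ℝ g h)]
      calc _ ≤ (2 * (N * ‖h‖ ^ 2) * |inner ℝ g h| ^ (p - 2)) * ρ ‖h‖ := by
            refine mul_le_mul_of_nonneg_right (hs.trans ?_) (hρ0 _)
            gcongr
        _ = 2 * N * ‖g‖ ^ (p - 2) * (‖h‖ ^ 2 * (‖h‖ ^ (p - 2) *
          |inner ℝ (‖g‖⁻¹ • g) (‖h‖⁻¹ • h)| ^ (p - 2))) * ρ ‖h‖ := by rw [e]; ring
        _ = _ := by rw [hmul _ _ hh0.le]; ring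
  · set C : ℝ := (p - 2 + 1) * 2 ^ (p - 2) with hCdef
    have hq : 0 ≤ p - 2 := by linarith
    have hC : 0 ≤ C := by positivity
    refine ⟨2 * C + 2 * 2 ^ (p - 1), by positivity, ?_⟩
    intro ρ hρ hρ0 hA x u hu hu2 M hM N hN _
    have hN0 : 0 ≤ N := le_trans (by positivity) (hN x (Metric.mem_ball_self one_pos))
    set g := gradient u x with hgdef
    refine main_of_D hp hC ρ hρ hρ0 hA x u hu M hM N hN0 g
      (fun h => (C * (N * ‖g‖ ^ (p - 2) + N ^ max 1 (p - 1))) *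
        (min 1 (‖h‖ ^ p) * ρ ‖h‖)) (hA.const_mul _) ?_ ?_ ?_
    · intro h
      exact mul_nonneg (by positivity)
        (mul_nonneg (le_min zero_le_one (by positivity)) (hρ0 _))
    · rw [integral_const_mul]
    · refine Eventually.of_forall fun h h1 => ?_
      rw [diff_identity x u h, ← hgdef]
      have ht := taylor_aux u x N hu2 hN h h1
      have hs := psi_large hq (-inner ℝ g h) (-(u (x + h) - u x - fderiv ℝ u x h))
      rw [abs_neg (u (x + h) - u x - fderiv ℝ u x h), ← hCdef] at hs
      rw [hmin _ (norm_nonneg _) h1, ← mul_assoc]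
      refine mul_le_mul_of_nonneg_right (hs.trans ?_) (hρ0 _)
      rw [mul_assoc C (N * ‖g‖ ^ (p - 2) + N ^ max 1 (p - 1))]
      refine mul_le_mul_of_nonneg_left ?_ hC
      rw [add_mul, abs_neg (inner ℝ g h)]
      set r := |u (x + h) - u x - fderiv ℝ u x h|
      have hr0 : 0 ≤ r := abs_nonneg _
      have hh0 := norm_nonneg h
      refine add_le_add ?_ ?_
      · calc r * |inner ℝ g h| ^ (p - 2) ≤ (N * ‖h‖ ^ 2) * (‖g‖ * ‖h‖) ^ (p - 2) := by
              gcongr; exact abs_real_inner_le_norm g h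
          _ = N * ‖g‖ ^ (p - 2) * (‖h‖ ^ 2 * (‖h‖ ^ (p - 2) * 1)) := by
              rw [Real.mul_rpow (by positivity) (by positivity)]; ring
          _ = _ := by rw [hmul _ _ hh0, mul_one]
      · have e : N * N ^ (p - 2) = N ^ max 1 (p - 1) := by
          rw [max_eq_right (by linarith), mul_comm, ← Real.rpow_add_one' hN0 (by linarith)]
          congr 1; ring
        have hle : (‖h‖ ^ 2) ^ (p - 2) ≤ ‖h‖ ^ (p - 2) := by
          refine Real.rpow_le_rpow (by positivity) ?_ hq
          nlinarith
        calc r * r ^ (p - 2) ≤ (N * ‖h‖ ^ 2) * (N * ‖h‖ ^ 2) ^ (p - 2) := by gcongr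
          _ = N * N ^ (p - 2) * (‖h‖ ^ 2 * (‖h‖ ^ 2) ^ (p - 2)) := by
            rw [Real.mul_rpow (by positivity) (by positivity)]; ring
          _ ≤ N * N ^ (p - 2) * (‖h‖ ^ 2 * (‖h‖ ^ (p - 2) * 1)) := by
            rw [mul_one]; gcongr
          _ = _ := by rw [hmul _ _ hh0, mul_one, e]
end
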